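/- Every 2-resilient 3-uniform hypergraph H with matching number 2 satisfies |H| ≤ 56, and this bound is attained by the complete 3-graph on 8 vertices. Equivalently, m(3,2) = binom(8,3) = 56. -/

import Mathlib

/-- The matching number of a hypergraph: the largest size of a set of
pairwise disjoint edges. -/
noncomputable def matchingNumber (H : Finset (Finset ℕ)) : ℕ :=
  sSup {m | ∃ M : Finset (Finset ℕ), M ⊆ H ∧ M.card = m ∧
    (M : Set (Finset ℕ)).PairwiseDisjoint id}

/-- A hypergraph is `t`-resilient if deleting any set of at most `t`
vertices does not decrease its matching number. -/
def Resilient (t : ℕ) (H : Finset (Finset ℕ)) : Prop :=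
  ∀ T : Finset ℕ, T.card ≤ t →
    matchingNumber (H.filter fun F => Disjoint F T) = matchingNumber H

/-- `S 0, …, S (r-1)` form a pseudo sunflower with center `C`:
the `S i` are distinct, `C` is a proper subset of one of them, and the
sets `S i \ C` are pairwise disjoint. -/
def IsPseudoSunflower {r : ℕ} (S : Fin r → Finset ℕ) (C : Finset ℕ) : Prop :=
  Function.Injective S ∧ (∃ i, C ⊂ S i) ∧
    ∀ i j, i ≠ j → Disjoint (S i \ C) (S j \ C)

/-- The covering (transversal) number of a hypergraph. -/
noncomputable def coverNumber (H : Finset (Finset ℕ)) : ℕ :=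
  sInf {m | ∃ Y : Finset ℕ, Y.card = m ∧ ∀ F ∈ H, (F ∩ Y).Nonempty}


abbrev FF := Finset (Finset ℕ)

/-- graph with 2-element edges and maximum degree at most 4 -/
def Gr (M : Finset (Finset ℕ)) : Prop :=
  (∀ e ∈ M, e.card = 2) ∧ ∀ w, (M.filter (fun e => w ∈ e)).card ≤ 4

/-- crossing -/
def Cr (M N : Finset (Finset ℕ)) : Prop := ∀ e ∈ M, ∀ f ∈ N, ¬ Disjoint e f

lemma Cr.symm {M N : Finset (Finset ℕ)} (h : Cr M N) : Cr N M :=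
  fun e he f hf hd => h f hf e he hd.symm

lemma cover_bound {M : Finset (Finset ℕ)} {d : ℕ} (hd : ∀ w, (M.filter (fun e => w ∈ e)).card ≤ d)
    (X : Finset ℕ) (hX : ∀ e ∈ M, ¬ Disjoint e X) : M.card ≤ d * X.card := by
  have h1 : M ⊆ X.biUnion (fun w => M.filter (fun e => w ∈ e)) := by
    intro e he
    have := hX e he
    rw [Finset.not_disjoint_iff] at this
    obtain ⟨w, hw, hx⟩ := this
    simp only [Finset.mem_biUnion, Finset.mem_filter]
    exact ⟨w, hx, he, hw⟩
  have h2 := Finset.card_le_card h1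
  have h3 := Finset.card_biUnion_le_card_mul X (fun w => M.filter (fun e => w ∈ e)) d (fun w _ => hd w)
  rw [Nat.mul_comm]; exact h2.trans h3

lemma two_of {e : Finset ℕ} (he : e.card = 2) {x y : ℕ} (hx : x ∈ e) (hy : y ∈ e) (hxy : x ≠ y) :
    e = {x, y} := by
  symm
  apply Finset.eq_of_subset_of_card_le
  · intro z hz; simp at hz; rcases hz with rfl | rfl <;> assumption
  · rw [he, Finset.card_pair hxy]

lemma star_plus {M : Finset (Finset ℕ)} (hM : Gr M) (v : ℕ) (L : Finset (Finset ℕ))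
    (h : ∀ e ∈ M, v ∈ e ∨ e ∈ L) : M.card ≤ 4 + L.card := by
  have h1 : M ⊆ M.filter (fun e => v ∈ e) ∪ L := by
    intro e he
    rcases h e he with h | h <;> simp [he, h]
  have := (Finset.card_le_card h1).trans (Finset.card_union_le _ _)
  have := hM.2 v
  omega

lemma star_bd {M : Finset (Finset ℕ)} (hM : Gr M) (v : ℕ)
    (h : ∀ e ∈ M, v ∈ e) : M.card ≤ 4 := by
  have := star_plus hM v ∅ (fun e he => Or.inl (h e he))
  simpa using this

lemma star2_bd {M : Finset (Finset ℕ)} (hM : Gr M) (u v : ℕ) (huv : u ≠ v)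
    (h : ∀ e ∈ M, u ∈ e ∧ v ∈ e) : M.card ≤ 1 := by
  have h1 : M ⊆ {{u, v}} := by
    intro e he
    simp only [Finset.mem_singleton]
    exact two_of (hM.1 e he) (h e he).1 (h e he).2 huv
  simpa using Finset.card_le_card h1

lemma tri_bd {M : Finset (Finset ℕ)} (hM : Gr M) (P : Finset ℕ)
    (h : ∀ e ∈ M, e ⊆ P) : M.card ≤ P.card.choose 2 := by
  rw [← Finset.card_powersetCard]
  apply Finset.card_le_card
  intro e he
  rw [Finset.mem_powersetCard]
  exact ⟨h e he, hM.1 e he⟩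

lemma Gr.subset {M N : Finset (Finset ℕ)} (hM : Gr M) (h : N ⊆ M) : Gr N :=
  ⟨fun e he => hM.1 e (h he), fun w =>
    (Finset.card_le_card (Finset.filter_subset_filter _ h)).trans (hM.2 w)⟩

lemma cross1 {M N : Finset (Finset ℕ)} (hM : Gr M) (hN : Gr N) (h : Cr M N) (hs : 1 ≤ M.card) :
    N.card ≤ 8 := by
  obtain ⟨e, he⟩ := Finset.card_pos.mp hs
  have := cover_bound hN.2 e (fun f hf hd => h e he f hf hd.symm)
  rw [hM.1 e he] at this
  exact this

lemma cross2 {M N : Finset (Finset ℕ)} (hM : Gr M) (hN : Gr N) (h : Cr M N) (hs : 2 ≤ M.card) :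
    N.card ≤ 5 := by
  obtain ⟨e, he, f, hf, hef⟩ := Finset.one_lt_card.mp hs
  have hec := hM.1 e he
  have hfc := hM.1 f hf
  by_cases hd : Disjoint e f
  · obtain ⟨a, b, hab, rfl⟩ := Finset.card_eq_two.mp hec
    obtain ⟨c, d, hcd, rfl⟩ := Finset.card_eq_two.mp hfc
    have : N ⊆ {{a,c},{a,d},{b,c},{b,d}} := by
      intro g hg
      have h1 := h _ he g hg
      have h2 := h _ hf g hg
      have h3 := hN.1 g hg
      simp only [Finset.disjoint_left, Finset.mem_insert, Finset.mem_singleton] at h1 h2 hd ⊢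
      push Not at h1 h2
      obtain ⟨x, hx, hxg⟩ := h1
      obtain ⟨y, hy, hyg⟩ := h2
      have : x ≠ y := by grind
      have := two_of h3 hxg hyg this
      grind
    have := Finset.card_le_card this
    have := Finset.card_le_four (a := ({a,c}:Finset ℕ)) (b := {a,d}) (c := {b,c}) (d := {b,d})
    omega
  · rw [Finset.not_disjoint_iff] at hd
    obtain ⟨v, hve, hvf⟩ := hd
    obtain ⟨a, ha, hav⟩ := Finset.exists_mem_ne (s := e) (by omega) v
    obtain ⟨b, hb, hbv⟩ := Finset.exists_mem_ne (s := f) (by omega) v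
    have e1 := two_of hec hve ha hav.symm
    have f1 := two_of hfc hvf hb hbv.symm
    have hab : a ≠ b := by rintro rfl; exact hef (e1.trans f1.symm)
    have := star_plus hN v {{a,b}} (by
      intro g hg
      have h1 := h _ he g hg
      have h2 := h _ hf g hg
      have h3 := hN.1 g hg
      by_cases hv : v ∈ g
      · exact Or.inl hv
      right
      rw [e1] at h1; rw [f1] at h2
      simp only [Finset.disjoint_left, Finset.mem_insert, Finset.mem_singleton] at h1 h2 ⊢
      apply two_of h3 _ _ hab <;> grind)
    simpa using this

lemma cross3 {M N : Finset (Finset ℕ)} (hM : Gr M) (hN : Gr N) (h : Cr M N) (hs : 3 ≤ M.card) :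
    N.card ≤ 4 := by
  by_cases hdis : ∃ e ∈ M, ∃ f ∈ M, Disjoint e f
  · obtain ⟨e, he, f, hf, hd⟩ := hdis
    have hec := hM.1 e he
    have hfc := hM.1 f hf
    obtain ⟨a, b, hab, rfl⟩ := Finset.card_eq_two.mp hec
    obtain ⟨c, d, hcd, rfl⟩ := Finset.card_eq_two.mp hfc
    have : N ⊆ {{a,c},{a,d},{b,c},{b,d}} := by
      intro g hg
      have h1 := h _ he g hg
      have h2 := h _ hf g hg
      have h3 := hN.1 g hg
      simp only [Finset.disjoint_left, Finset.mem_insert, Finset.mem_singleton] at h1 h2 hd ⊢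
      push Not at h1 h2
      obtain ⟨x, hx, hxg⟩ := h1
      obtain ⟨y, hy, hyg⟩ := h2
      have : x ≠ y := by grind
      have := two_of h3 hxg hyg this
      grind
    have := Finset.card_le_card this
    have := Finset.card_le_four (a := ({a,c}:Finset ℕ)) (b := {a,d}) (c := {b,c}) (d := {b,d})
    omega
  · push Not at hdis
    obtain ⟨e, he, f, hf, g, hg, hef, heg, hfg⟩ := Finset.two_lt_card.mp hs
    have hec := hM.1 e he
    have hfc := hM.1 f hf
    have hgc := hM.1 g hg
    have hd := hdis e he f hf
    rw [Finset.not_disjoint_iff] at hd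
    obtain ⟨v, hve, hvf⟩ := hd
    obtain ⟨a, ha, hav⟩ := Finset.exists_mem_ne (s := e) (by omega) v
    obtain ⟨b, hb, hbv⟩ := Finset.exists_mem_ne (s := f) (by omega) v
    have e1 := two_of hec hve ha hav.symm
    have f1 := two_of hfc hvf hb hbv.symm
    have hab : a ≠ b := by rintro rfl; exact hef (e1.trans f1.symm)
    have key : ∀ q ∈ N, v ∈ q ∨ q = {a,b} := by
      intro q hq
      have h1 := h _ he q hq
      have h2 := h _ hf q hq
      have h3 := hN.1 q hq
      by_cases hv : v ∈ q
      · exact Or.inl hv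
      right
      rw [e1] at h1; rw [f1] at h2
      simp only [Finset.disjoint_left, Finset.mem_insert, Finset.mem_singleton] at h1 h2
      apply two_of h3 _ _ hab <;> grind
    by_cases hvg : v ∈ g
    · obtain ⟨c, hc, hcv⟩ := Finset.exists_mem_ne (s := g) (by omega) v
      have g1 := two_of hgc hvg hc hcv.symm
      apply star_bd hN v
      intro q hq
      rcases key q hq with h4 | h4
      · exact h4
      · have := h _ hg q hq
        have hca : c ≠ a := by rintro rfl; exact heg (e1.trans g1.symm)
        have hcb : c ≠ b := by rintro rfl; exact hfg (f1.trans g1.symm)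
        rw [g1, h4] at this
        simp only [Finset.disjoint_left, Finset.mem_insert, Finset.mem_singleton] at this
        grind
    · have ga := hdis e he g hg
      have gb := hdis f hf g hg
      rw [e1, Finset.not_disjoint_iff] at ga
      rw [f1, Finset.not_disjoint_iff] at gb
      have ga' : a ∈ g := by grind
      have gb' : b ∈ g := by grind
      have g1 := two_of hgc ga' gb' hab
      have : N ⊆ {{v,a},{v,b},{a,b}} := by
        intro q hq
        have h3 := hN.1 q hq
        rcases key q hq with h4 | h4
        · have := h _ hg q hq
          rw [g1, Finset.not_disjoint_iff] at this
          obtain ⟨x, hx, hxq⟩ := this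
          have := two_of h3 h4 hxq (by grind)
          grind
        · simp [h4]
      have := Finset.card_le_card this
      have := Finset.card_le_three (a := ({v,a}:Finset ℕ)) (b := {v,b}) (c := {a,b})
      omega

lemma cross_sum {M N : Finset (Finset ℕ)} (hM : Gr M) (hN : Gr N) (h : Cr M N)
    (h1 : 1 ≤ M.card) (h2 : 1 ≤ N.card) :
    M.card + N.card ≤ 8 ∨ (M.card = 8 ∧ N.card = 1) ∨ (M.card = 1 ∧ N.card = 8) := by
  have a1 := cross1 hM hN h h1
  have b1 := cross1 hN hM h.symm h2
  have a2 := cross2 hM hN h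
  have b2 := cross2 hN hM h.symm
  have a3 := cross3 hM hN h
  have b3 := cross3 hN hM h.symm
  omega


def HG (M : Finset (Finset ℕ)) (P R : Finset ℕ) : Prop :=
  ∀ e ∈ M, ∀ x ∈ P, ∀ y ∈ R, x ≠ y → x ∈ e ∨ y ∈ e

lemma HG.symm {M : Finset (Finset ℕ)} {P R : Finset ℕ} (h : HG M P R) : HG M R P :=
  fun e he x hx y hy hxy => (h e he y hy x hx hxy.symm).symm

lemma g3 {M : Finset (Finset ℕ)} {P R : Finset ℕ} (hM : Gr M) (h : HG M P R) {y : ℕ} (hy : y ∈ R)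
    (hP : 3 ≤ (P.erase y).card) : ∀ e ∈ M, y ∈ e := by
  intro e he
  by_contra hye
  have : P.erase y ⊆ e := by
    intro x hx
    rw [Finset.mem_erase] at hx
    exact (h e he x hx.2 y hy hx.1).resolve_right hye
  have := Finset.card_le_card this
  have := hM.1 e he
  omega

lemma g3' {M : Finset (Finset ℕ)} {P R : Finset ℕ} (hM : Gr M) (h : HG M P R) {y : ℕ} (hy : y ∈ R)
    (hP : 4 ≤ P.card) : ∀ e ∈ M, y ∈ e := by
  apply g3 hM h hy
  have := Finset.pred_card_le_card_erase (s := P) (a := y)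
  omega

lemma g3'' {M : Finset (Finset ℕ)} {P R : Finset ℕ} (hM : Gr M) (h : HG M P R) {y : ℕ} (hy : y ∈ R)
    (hP : 3 ≤ P.card) (hyP : y ∉ P) : ∀ e ∈ M, y ∈ e := by
  apply g3 hM h hy
  rwa [Finset.erase_eq_of_notMem hyP]

lemma gd {M : Finset (Finset ℕ)} {P R : Finset ℕ} (hM : Gr M) (h : HG M P R)
    (hP : 3 ≤ P.card) (hR : 1 ≤ R.card) : M.card ≤ 5 := by
  obtain ⟨y, hy⟩ := Finset.card_pos.mp hR
  have := Finset.pred_card_le_card_erase (s := P) (a := y)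
  obtain ⟨u, hu, v, hv, huv⟩ := Finset.one_lt_card.mp (show 1 < (P.erase y).card by omega)
  rw [Finset.mem_erase] at hu hv
  have := star_plus hM y {{u,v}} (by
    intro e he
    by_cases hye : y ∈ e
    · exact Or.inl hye
    · right
      rw [Finset.mem_singleton]
      exact two_of (hM.1 e he) ((h e he u hu.2 y hy hu.1).resolve_right hye)
        ((h e he v hv.2 y hy hv.1).resolve_right hye) huv)
  simpa using this

lemma ge {M : Finset (Finset ℕ)} {P R : Finset ℕ} (hM : Gr M) (h : HG M P R)
    {x y : ℕ} (hx : x ∈ P) (hy : y ∈ R) (hxy : x ≠ y) : M.card ≤ 8 := by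
  have := cover_bound hM.2 {x, y} (by
    intro e he
    rw [Finset.not_disjoint_iff]
    rcases h e he x hx y hy hxy with h | h
    · exact ⟨x, h, by simp⟩
    · exact ⟨y, h, by simp⟩)
  rw [Finset.card_pair hxy] at this
  exact this

/-- R ⊆ P, |P| = 3, |R| ≥ 2 -/
lemma gtri {M : Finset (Finset ℕ)} {P R : Finset ℕ} (hM : Gr M) (h : HG M P R)
    (hP : P.card = 3) (hR : 2 ≤ R.card) (hRP : R ⊆ P) : M.card ≤ 3 := by
  obtain ⟨u, hu, v, hv, huv⟩ := Finset.one_lt_card.mp hR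
  have h3 : (3:ℕ) = Nat.choose 3 2 := rfl
  rw [h3, ← hP]
  apply tri_bd hM
  intro e he
  have huP := hRP hu
  have hvP := hRP hv
  obtain ⟨z, hz⟩ : ∃ z, z ∈ (P.erase u).erase v := by
    apply Finset.card_pos.mp
    rw [Finset.card_erase_of_mem (by simp [hvP, huv.symm]), Finset.card_erase_of_mem huP]
    omega
  simp only [Finset.mem_erase] at hz
  have e2 := hM.1 e he
  have a1 := h e he v hvP u hu huv.symm
  have a2 := h e he z hz.2.2 u hu hz.2.1
  have a3 := h e he z hz.2.2 v hv hz.1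
  by_cases hue : u ∈ e
  · rcases a3 with a3 | a3
    · rw [two_of e2 hue a3 hz.2.1.symm]; grind
    · rw [two_of e2 hue a3 huv]; grind
  · rw [two_of e2 (a1.resolve_right hue) (a2.resolve_right hue) hz.1.symm]; grind

lemma gc {M : Finset (Finset ℕ)} {P R : Finset ℕ} (hM : Gr M) (h : HG M P R)
    (hP : P.card ≤ 4) (hR : R.card ≤ 4) (hs : 5 ≤ P.card + R.card) : M.card ≤ 4 := by
  wlog hw : R.card ≤ P.card generalizing P R
  · exact this h.symm hR hP (by omega) (by omega)
  by_cases h4 : P.card = 4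
  · obtain ⟨y, hy⟩ := Finset.card_pos.mp (show 0 < R.card by omega)
    exact star_bd hM y (g3' hM h hy (by omega))
  · by_cases hRP : R ⊆ P
    · have := gtri hM h (by omega) (by omega) hRP
      omega
    · obtain ⟨y, hy, hyP⟩ := Finset.not_subset.mp hRP
      exact star_bd hM y (g3'' hM h hy (by omega) hyP)

lemma ga {M : Finset (Finset ℕ)} {P R : Finset ℕ} (hM : Gr M) (h : HG M P R) (h1 : 1 ≤ M.card)
    (hP : P.card ≤ 4) (hR : R.card ≤ 4) : P.card + R.card ≤ 6 := by
  wlog hw : R.card ≤ P.card generalizing P R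
  · have := this h.symm hR hP (by omega); omega
  by_contra hc
  obtain ⟨e, he⟩ := Finset.card_pos.mp h1
  have : R ⊆ e := fun y hy => g3' hM h hy (by omega) e he
  have := Finset.card_le_card this
  have := hM.1 e he
  omega

lemma gb {M : Finset (Finset ℕ)} {P R : Finset ℕ} (hM : Gr M) (h : HG M P R)
    (hP : P.card ≤ 4) (hR : R.card ≤ 4) (hs : 6 ≤ P.card + R.card) :
    M.card ≤ 1 ∨ (P.card = 3 ∧ R.card = 3 ∧ M.card ≤ 3) := by
  wlog hw : R.card ≤ P.card generalizing P R
  · have := this h.symm hR hP (by omega) (by omega); omega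
  by_cases h4 : P.card = 4
  · obtain ⟨u, hu, v, hv, huv⟩ := Finset.one_lt_card.mp (show 1 < R.card by omega)
    left
    exact star2_bd hM u v huv (fun e he => ⟨g3' hM h hu (by omega) e he, g3' hM h hv (by omega) e he⟩)
  · by_cases hRP : R ⊆ P
    · have := gtri hM h (by omega) (by omega) hRP
      omega
    · obtain ⟨y, hy, hyP⟩ := Finset.not_subset.mp hRP
      have hPR : ¬ P ⊆ R := fun hh => by
        have := Finset.eq_of_subset_of_card_le hh (by omega)
        exact hRP this.symm.subset
      obtain ⟨x, hx, hxR⟩ := Finset.not_subset.mp hPR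
      left
      exact star2_bd hM x y (by rintro rfl; exact hxR hy) (fun e he =>
        ⟨g3'' hM h.symm hx (by omega) hxR e he, g3'' hM h hy (by omega) hyP e he⟩)

lemma lemG {M : Finset (Finset ℕ)} {P R : Finset ℕ} (hM : Gr M) (h : HG M P R) (h1 : 1 ≤ M.card)
    (hP : P.card ≤ 4) (hR : R.card ≤ 4) :
    P.card + R.card ≤ 6 ∧
    (6 ≤ P.card + R.card → M.card ≤ 1 ∨ (P.card = 3 ∧ R.card = 3 ∧ M.card ≤ 3)) ∧
    (5 ≤ P.card + R.card → M.card ≤ 4) ∧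
    (3 ≤ P.card → 1 ≤ R.card → M.card ≤ 5) ∧
    (3 ≤ R.card → 1 ≤ P.card → M.card ≤ 5) ∧
    (2 ≤ R.card → 1 ≤ P.card → M.card ≤ 8) := by
  refine ⟨ga hM h h1 hP hR, gb hM h hP hR, gc hM h hP hR, gd hM h, gd hM h.symm, ?_⟩
  intro h2 h3
  obtain ⟨x, hx⟩ := Finset.card_pos.mp h3
  obtain ⟨y, hy, hyx⟩ := Finset.exists_mem_ne (s := R) (by omega) x
  exact ge hM h hx hy hyx.symm


def Mk (H : Finset (Finset ℕ)) (Q : Finset ℕ) (k : ℕ) : Finset (Finset ℕ) :=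
  ((H.biUnion id).powersetCard 2).filter (fun e => Disjoint e Q ∧ insert k e ∈ H)

def Ev (H : Finset (Finset ℕ)) (Q : Finset ℕ) (p : Finset ℕ) : Finset ℕ :=
  (H.biUnion id).filter (fun w => w ∉ Q ∧ insert w p ∈ H)

def Cov (H : Finset (Finset ℕ)) (Q : Finset ℕ) : Prop := ∀ F ∈ H, ¬ Disjoint F Q

structure Good (H : Finset (Finset ℕ)) : Prop where
  c3 : ∀ F ∈ H, F.card = 3
  n3 : ∀ A ∈ H, ∀ B ∈ H, ∀ C ∈ H, Disjoint A B → Disjoint A C → Disjoint B C → False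
  pp : ∀ x y : ℕ, ∃ A ∈ H, ∃ B ∈ H, Disjoint A B ∧ x ∉ A ∧ x ∉ B ∧ y ∉ A ∧ y ∉ B

lemma mem_Mk {H : Finset (Finset ℕ)} {Q : Finset ℕ} {k : ℕ} {e : Finset ℕ} :
    e ∈ Mk H Q k ↔ e.card = 2 ∧ Disjoint e Q ∧ insert k e ∈ H := by
  unfold Mk
  rw [Finset.mem_filter, Finset.mem_powersetCard]
  constructor
  · rintro ⟨⟨_, h1⟩, h2, h3⟩; exact ⟨h1, h2, h3⟩
  · rintro ⟨h1, h2, h3⟩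
    refine ⟨⟨?_, h1⟩, h2, h3⟩
    intro x hx
    exact Finset.mem_biUnion.mpr ⟨_, h3, by simp [hx]⟩

lemma mem_Ev {H : Finset (Finset ℕ)} {Q : Finset ℕ} {p : Finset ℕ} {w : ℕ} :
    w ∈ Ev H Q p ↔ w ∉ Q ∧ insert w p ∈ H := by
  unfold Ev
  rw [Finset.mem_filter]
  constructor
  · rintro ⟨_, h2⟩; exact h2
  · rintro h2
    exact ⟨Finset.mem_biUnion.mpr ⟨_, h2.2, by simp⟩, h2⟩

lemma decomp {H : Finset (Finset ℕ)} (h3 : ∀ F ∈ H, F.card = 3) {Q : Finset ℕ} (hQ : Cov H Q) :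
    H.card ≤ (H.filter (fun F => F ⊆ Q)).card + ∑ p ∈ Q.powersetCard 2, (Ev H Q p).card
      + ∑ k ∈ Q, (Mk H Q k).card := by
  have hsub : H ⊆ (H.filter (fun F => F ⊆ Q)) ∪
      (Q.powersetCard 2).biUnion (fun p => (Ev H Q p).image (fun w => insert w p)) ∪
      Q.biUnion (fun k => (Mk H Q k).image (fun e => insert k e)) := by
    intro F hF
    have hc := h3 F hF
    have hsum := Finset.card_inter_add_card_sdiff F Q
    have hne : (F ∩ Q).card ≠ 0 := by
      intro h0
      rw [Finset.card_eq_zero] at h0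
      exact hQ F hF (Finset.disjoint_iff_inter_eq_empty.mpr h0)
    simp only [Finset.mem_union, Finset.mem_biUnion, Finset.mem_filter, Finset.mem_image]
    rcases (show (F \ Q).card = 0 ∨ (F \ Q).card = 1 ∨ (F \ Q).card = 2 by omega) with h | h | h
    · rw [Finset.card_eq_zero, Finset.sdiff_eq_empty_iff_subset] at h
      exact Or.inl (Or.inl ⟨hF, h⟩)
    · obtain ⟨w, hw⟩ := Finset.card_eq_one.mp h
      have hFe : insert w (F ∩ Q) = F := by
        ext z
        have : z ∈ F \ Q ↔ z = w := by rw [hw]; simp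
        grind
      have hwQ : w ∉ Q := by
        have : w ∈ F \ Q := by rw [hw]; simp
        grind
      refine Or.inl (Or.inr ⟨F ∩ Q, Finset.mem_powersetCard.mpr ⟨Finset.inter_subset_right, by omega⟩,
        w, mem_Ev.mpr ⟨hwQ, by rw [hFe]; exact hF⟩, hFe⟩)
    · obtain ⟨k, hk⟩ := Finset.card_eq_one.mp (show (F ∩ Q).card = 1 by omega)
      have hFe : insert k (F \ Q) = F := by
        ext z
        have : z ∈ F ∩ Q ↔ z = k := by rw [hk]; simp
        grind
      have hkQ : k ∈ Q := by
        have : k ∈ F ∩ Q := by rw [hk]; simp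
        grind
      exact Or.inr ⟨k, hkQ, F \ Q, mem_Mk.mpr ⟨h, Finset.sdiff_disjoint, hFe.symm ▸ hF⟩, hFe⟩
  refine (Finset.card_le_card hsub).trans ((Finset.card_union_le _ _).trans ?_)
  refine add_le_add ((Finset.card_union_le _ _).trans (add_le_add le_rfl ?_)) ?_
  · refine Finset.card_biUnion_le.trans (Finset.sum_le_sum fun p _ => Finset.card_image_le)
  · refine Finset.card_biUnion_le.trans (Finset.sum_le_sum fun p _ => Finset.card_image_le)

lemma sdiff_le2 {H : Finset (Finset ℕ)} (h3 : ∀ F ∈ H, F.card = 3) {Q : Finset ℕ} (hQ : Cov H Q)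
    {A : Finset ℕ} (hA : A ∈ H) : (A \ Q).card ≤ 2 := by
  have hsum := Finset.card_inter_add_card_sdiff A Q
  have hne : (A ∩ Q).card ≠ 0 := by
    intro h0
    rw [Finset.card_eq_zero] at h0
    exact hQ A hA (Finset.disjoint_iff_inter_eq_empty.mpr h0)
  have := h3 A hA
  omega

lemma Good.pq {H : Finset (Finset ℕ)} (hG : Good H) {Q : Finset ℕ} (hQ : Cov H Q) (x y : ℕ) :
    ∃ A ∈ H, ∃ B ∈ H, Disjoint A B ∧ x ∉ A ∧ x ∉ B ∧ y ∉ A ∧ y ∉ B ∧ ((A ∪ B) \ Q).card ≤ 4 ∧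
      ∀ F ∈ H, ∃ z ∈ F, z ∈ A ∨ z ∈ B := by
  obtain ⟨A, hA, B, hB, hAB, h1, h2, h3, h4⟩ := hG.pp x y
  refine ⟨A, hA, B, hB, hAB, h1, h2, h3, h4, ?_, ?_⟩
  · rw [Finset.union_sdiff_distrib]
    have a := sdiff_le2 hG.c3 hQ hA
    have b := sdiff_le2 hG.c3 hQ hB
    have c := Finset.card_union_le (A \ Q) (B \ Q)
    omega
  · intro F hF
    by_contra hc
    push Not at hc
    exact hG.n3 A hA B hB F hF hAB (Finset.disjoint_right.mpr fun z hz => (hc z hz).1)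
      (Finset.disjoint_right.mpr fun z hz => (hc z hz).2)

lemma Good.gr {H : Finset (Finset ℕ)} (hG : Good H) {Q : Finset ℕ} (hQ : Cov H Q) (k : ℕ) :
    Gr (Mk H Q k) := by
  refine ⟨fun e he => (mem_Mk.mp he).1, fun w => ?_⟩
  obtain ⟨A, hA, B, hB, hAB, h1, h2, h3, h4, h5, h6⟩ := hG.pq hQ k w
  have : (Mk H Q k).filter (fun e => w ∈ e) ⊆ ((A ∪ B) \ Q).image (fun z => {w, z}) := by
    intro e he
    rw [Finset.mem_filter, mem_Mk] at he
    obtain ⟨⟨e1, e2, e3⟩, hw⟩ := he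
    obtain ⟨z, hz, hz'⟩ := h6 _ e3
    rw [Finset.mem_image]
    have hzk : z ≠ k := by rintro rfl; tauto
    have hzw : z ≠ w := by rintro rfl; tauto
    have hze : z ∈ e := by grind
    refine ⟨z, ?_, (two_of e1 hw hze hzw.symm).symm⟩
    rw [Finset.mem_sdiff, Finset.mem_union]
    exact ⟨hz', Finset.disjoint_left.mp e2 hze⟩
  exact (Finset.card_le_card this).trans (Finset.card_image_le.trans h5)

lemma Good.e4 {H : Finset (Finset ℕ)} (hG : Good H) {Q : Finset ℕ} (hQ : Cov H Q) (x y : ℕ) :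
    (Ev H Q {x, y}).card ≤ 4 := by
  obtain ⟨A, hA, B, hB, hAB, h1, h2, h3, h4, h5, h6⟩ := hG.pq hQ x y
  refine le_trans (Finset.card_le_card ?_) h5
  intro w hw
  rw [mem_Ev] at hw
  obtain ⟨z, hz, hz'⟩ := h6 _ hw.2
  rw [Finset.mem_sdiff, Finset.mem_union]
  have : z = w := by
    simp only [Finset.mem_insert, Finset.mem_singleton] at hz
    rcases hz with rfl | rfl | rfl <;> tauto
  subst this
  exact ⟨hz', hw.1⟩

lemma Good.mme {H : Finset (Finset ℕ)} (hG : Good H) {Q : Finset ℕ} {k l i j : ℕ}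
    (hk : k ∈ Q) (hl : l ∈ Q) (hi : i ∈ Q) (hj : j ∈ Q)
    (hkl : k ≠ l) (hki : k ≠ i) (hkj : k ≠ j) (hli : l ≠ i) (hlj : l ≠ j)
    {e f : Finset ℕ} {w : ℕ} (he : e ∈ Mk H Q k) (hf : f ∈ Mk H Q l) (hw : w ∈ Ev H Q {i, j})
    (hwe : w ∉ e) (hwf : w ∉ f) : ¬ Disjoint e f := by
  intro hd
  rw [mem_Mk] at he hf
  rw [mem_Ev] at hw
  have he2 := Finset.disjoint_left.mp he.2.1
  have hf2 := Finset.disjoint_left.mp hf.2.1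
  have hd2 := Finset.disjoint_left.mp hd
  refine hG.n3 _ he.2.2 _ hf.2.2 _ hw.2 ?_ ?_ ?_ <;> rw [Finset.disjoint_left] <;> grind

lemma Good.mee {H : Finset (Finset ℕ)} (hG : Good H) {Q : Finset ℕ} {k a b c d : ℕ}
    (hk : k ∈ Q) (ha : a ∈ Q) (hb : b ∈ Q) (hc : c ∈ Q) (hd : d ∈ Q)
    (hka : k ≠ a) (hkb : k ≠ b) (hkc : k ≠ c) (hkd : k ≠ d)
    (hac : a ≠ c) (had : a ≠ d) (hbc : b ≠ c) (hbd : b ≠ d) :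
    HG (Mk H Q k) (Ev H Q {a, b}) (Ev H Q {c, d}) := by
  intro e he x hx y hy hxy
  by_contra hcon
  push Not at hcon
  rw [mem_Mk] at he
  rw [mem_Ev] at hx hy
  have he2 := Finset.disjoint_left.mp he.2.1
  refine hG.n3 _ he.2.2 _ hx.2 _ hy.2 ?_ ?_ ?_ <;> rw [Finset.disjoint_left] <;> grind

lemma Good.eee {H : Finset (Finset ℕ)} (hG : Good H) {Q : Finset ℕ} {a b c d u v : ℕ}
    (ha : a ∈ Q) (hb : b ∈ Q) (hc : c ∈ Q) (hd : d ∈ Q) (hu : u ∈ Q) (hv : v ∈ Q)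
    (hua : u ≠ a) (hub : u ≠ b) (huc : u ≠ c) (hud : u ≠ d)
    (hva : v ≠ a) (hvb : v ≠ b) (hvc : v ≠ c) (hvd : v ≠ d)
    (hac : a ≠ c) (had : a ≠ d) (hbc : b ≠ c) (hbd : b ≠ d) {x y z : ℕ}
    (hx : x ∈ Ev H Q {a, b}) (hy : y ∈ Ev H Q {c, d}) (hz : z ∈ Ev H Q {u, v}) 
    (hxy : x ≠ y) (hxz : x ≠ z) (hyz : y ≠ z) : False := by
  rw [mem_Ev] at hx hy hz
  refine hG.n3 _ hx.2 _ hy.2 _ hz.2 ?_ ?_ ?_ <;> rw [Finset.disjoint_left] <;> grind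

lemma Good.mma {H : Finset (Finset ℕ)} (hG : Good H) {Q A : Finset ℕ} {k l : ℕ}
    (hk : k ∈ Q) (hl : l ∈ Q) (hkl : k ≠ l) (hA : A ∈ H) (hAQ : A ⊆ Q) (hkA : k ∉ A) (hlA : l ∉ A) :
    Cr (Mk H Q k) (Mk H Q l) := by
  intro e he f hf hd
  rw [mem_Mk] at he hf
  have he2 := Finset.disjoint_left.mp he.2.1
  have hf2 := Finset.disjoint_left.mp hf.2.1
  have hd2 := Finset.disjoint_left.mp hd
  refine hG.n3 _ he.2.2 _ hf.2.2 _ hA ?_ ?_ ?_ <;> rw [Finset.disjoint_left] <;> grind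


structure EL (H : Finset (Finset ℕ)) : Prop where
  c3 : ∀ F ∈ H, F.card = 3
  n2 : ∀ A ∈ H, ∀ B ∈ H, ¬ Disjoint A B
  pp : ∀ x y : ℕ, ∃ A ∈ H, x ∉ A ∧ y ∉ A

lemma two_star {M : Finset (Finset ℕ)} (hM : ∀ e ∈ M, e.card = 2) {x : ℕ}
    (h : 2 ≤ (M.filter (fun e => x ∈ e)).card) :
    ∃ a b, a ≠ b ∧ a ≠ x ∧ b ≠ x ∧ ({x, a} : Finset ℕ) ∈ M ∧ ({x, b} : Finset ℕ) ∈ M := by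
  obtain ⟨e, he, f, hf, hef⟩ := Finset.one_lt_card.mp h
  rw [Finset.mem_filter] at he hf
  have hec := hM e he.1
  have hfc := hM f hf.1
  obtain ⟨a, ha, hav⟩ := Finset.exists_mem_ne (s := e) (by omega) x
  obtain ⟨b, hb, hbv⟩ := Finset.exists_mem_ne (s := f) (by omega) x
  have e1 := two_of hec he.2 ha hav.symm
  have f1 := two_of hfc hf.2 hb hbv.symm
  refine ⟨a, b, ?_, hav, hbv, e1 ▸ he.1, f1 ▸ hf.1⟩
  rintro rfl; exact hef (e1.trans f1.symm)

lemma EL.ne {H : Finset (Finset ℕ)} (hE : EL H) {Q : Finset ℕ} {a b c : ℕ}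
    (hQe : Q = {a, b, c}) (hB : Q ∈ H) : ∃ e, e ∈ Mk H Q a := by
  obtain ⟨X, hX, h1, h2⟩ := hE.pp b c
  have := hE.n2 X hX _ hB
  have haX : a ∈ X := by rw [Finset.not_disjoint_iff] at this; grind
  refine ⟨X.erase a, mem_Mk.mpr ⟨?_, ?_, ?_⟩⟩
  · rw [Finset.card_erase_of_mem haX, hE.c3 X hX]
  · rw [Finset.disjoint_left]; grind
  · rwa [Finset.insert_erase haX]

lemma EL.cr {H : Finset (Finset ℕ)} (hE : EL H) {Q : Finset ℕ} {a b : ℕ} (ha : a ∈ Q) (hb : b ∈ Q)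
    (hab : a ≠ b) : Cr (Mk H Q a) (Mk H Q b) := by
  intro e he f hf hd
  rw [mem_Mk] at he hf
  have he2 := Finset.disjoint_left.mp he.2.1
  have hf2 := Finset.disjoint_left.mp hf.2.1
  have hd2 := Finset.disjoint_left.mp hd
  refine hE.n2 _ he.2.2 _ hf.2.2 ?_
  rw [Finset.disjoint_left]; grind

lemma EL.deg {H : Finset (Finset ℕ)} (hE : EL H) {Q : Finset ℕ} (hQ : Q ∈ H) (k w : ℕ) :
    ((Mk H Q k).filter (fun e => w ∈ e)).card ≤ 2 := by
  obtain ⟨X, hX, h1, h2⟩ := hE.pp k w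
  have hc : Cov H Q := fun F hF => hE.n2 F hF Q hQ
  have hl := sdiff_le2 hE.c3 hc hX
  have : (Mk H Q k).filter (fun e => w ∈ e) ⊆ (X \ Q).image (fun z => {w, z}) := by
    intro e he
    rw [Finset.mem_filter, mem_Mk] at he
    obtain ⟨⟨e1, e2, e3⟩, hw⟩ := he
    have := hE.n2 _ e3 X hX
    rw [Finset.not_disjoint_iff] at this
    obtain ⟨z, hz, hz'⟩ := this
    rw [Finset.mem_image]
    have hzk : z ≠ k := by rintro rfl; tauto
    have hzw : z ≠ w := by rintro rfl; tauto
    have hze : z ∈ e := by grind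
    refine ⟨z, ?_, (two_of e1 hw hze hzw.symm).symm⟩
    rw [Finset.mem_sdiff]
    exact ⟨hz', Finset.disjoint_left.mp e2 hze⟩
  exact (Finset.card_le_card this).trans (Finset.card_image_le.trans hl)

lemma EL.claim {H : Finset (Finset ℕ)} (hE : EL H) {Q : Finset ℕ} {i j k : ℕ} (hij : i ≠ j) (hik : i ≠ k)
    (hjk : j ≠ k) (hQe : Q = {i, j, k}) (hQ : Q ∈ H) :
    (Ev H Q {i, j}).card + (Mk H Q k).card ≤ 3 := by
  have hi : i ∈ Q := by simp [hQe]
  have hj : j ∈ Q := by simp [hQe]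
  have hk : k ∈ Q := by simp [hQe]
  have hEM : ∀ e ∈ Mk H Q k, Ev H Q {i, j} ⊆ e := by
    intro e he w hw
    rw [mem_Mk] at he
    rw [mem_Ev] at hw
    have := hE.n2 _ he.2.2 _ hw.2
    have he2 := Finset.disjoint_left.mp he.2.1
    rw [Finset.not_disjoint_iff] at this
    grind
  obtain ⟨e0, he0⟩ : ∃ e, e ∈ Mk H Q k := by
    exact hE.ne (a := k) (b := i) (c := j) (by rw [hQe]; grind) hQ
  have hle := Finset.card_le_card (hEM e0 he0)
  have hc2 : ∀ e ∈ Mk H Q k, e.card = 2 := fun e he => (mem_Mk.mp he).1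
  rw [hc2 e0 he0] at hle
  rcases (show (Ev H Q {i, j}).card = 2 ∨ (Ev H Q {i, j}).card = 1 ∨ (Ev H Q {i, j}).card = 0 by omega) with h | h | h
  · have : Mk H Q k ⊆ {Ev H Q {i, j}} := by
      intro e he
      rw [Finset.mem_singleton]
      exact (Finset.eq_of_subset_of_card_le (hEM e he) (by rw [hc2 e he, h])).symm
    have := Finset.card_le_card this
    rw [Finset.card_singleton] at this
    omega
  · obtain ⟨w, hw⟩ := Finset.card_eq_one.mp h
    have := hE.deg hQ k w
    rw [Finset.filter_true_of_mem (fun e he => hEM e he (by rw [hw]; simp))] at this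
    omega
  · by_contra hcon
    have h4 : 4 ≤ (Mk H Q k).card := by omega
    obtain ⟨e, he⟩ : ∃ e, e ∈ Mk H Q i := by
      exact hE.ne (a := i) (b := j) (c := k) hQe hQ
    obtain ⟨e2, he2⟩ : ∃ e, e ∈ Mk H Q j := by
      exact hE.ne (a := j) (b := i) (c := k) (by rw [hQe]; grind) hQ
    have hec := (mem_Mk.mp he).1
    obtain ⟨x, y, hxy, rfl⟩ := Finset.card_eq_two.mp hec
    have hcik := hE.cr hi hk hik
    have hcij := hE.cr hi hj hij
    have hcjk := hE.cr hj hk hjk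
    have hun : Mk H Q k = (Mk H Q k).filter (fun e => x ∈ e) ∪ (Mk H Q k).filter (fun e => y ∈ e) := by
      ext f
      have := hcik _ he f
      rw [Finset.not_disjoint_iff] at this
      simp only [Finset.mem_union, Finset.mem_filter]
      grind
    have hcu := Finset.card_union_add_card_inter ((Mk H Q k).filter (fun e => x ∈ e)) ((Mk H Q k).filter (fun e => y ∈ e))
    rw [← hun] at hcu
    have dx := hE.deg hQ k x
    have dy := hE.deg hQ k y
    have hint : ((Mk H Q k).filter (fun e => x ∈ e) ∩ (Mk H Q k).filter (fun e => y ∈ e)) = ∅ := by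
      rw [← Finset.card_eq_zero]; omega
    have hno : ({x, y} : Finset ℕ) ∉ Mk H Q k := by
      intro hh
      have : ({x, y} : Finset ℕ) ∈ ((Mk H Q k).filter (fun e => x ∈ e) ∩ (Mk H Q k).filter (fun e => y ∈ e)) := by
        simp [hh]
      rw [hint] at this; simp at this
    obtain ⟨a, b, hab, hax, hbx, hxa, hxb⟩ := two_star hc2 (x := x) (by omega)
    obtain ⟨c, d, hcd, hcy, hdy, hyc, hyd⟩ := two_star hc2 (x := y) (by omega)
    have hay : a ≠ y := by rintro rfl; exact hno hxa
    have hby : b ≠ y := by rintro rfl; exact hno hxb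
    have hcx : c ≠ x := by rintro rfl; rw [Finset.pair_comm] at hyc; exact hno hyc
    have hdx : d ≠ x := by rintro rfl; rw [Finset.pair_comm] at hyd; exact hno hyd
    have haQ : a ∉ Q := Finset.disjoint_left.mp (mem_Mk.mp hxa).2.1 (by simp)
    have hbQ : b ∉ Q := Finset.disjoint_left.mp (mem_Mk.mp hxb).2.1 (by simp)
    obtain ⟨G, hG, hkG, hxG⟩ := hE.pp k x
    have haG : a ∈ G := by
      have := hE.n2 _ hG _ (mem_Mk.mp hxa).2.2
      rw [Finset.not_disjoint_iff] at this
      grind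
    have hbG : b ∈ G := by
      have := hE.n2 _ hG _ (mem_Mk.mp hxb).2.2
      rw [Finset.not_disjoint_iff] at this
      grind
    have hm : ∃ m ∈ Q, m ∈ G := by
      have := hE.n2 _ hG _ hQ
      rw [Finset.not_disjoint_iff] at this
      grind
    obtain ⟨m, hmQ, hmG⟩ := hm
    have hGe : insert m {a, b} = G := by
      apply Finset.eq_of_subset_of_card_le
      · intro z; grind
      · rw [hE.c3 G hG, Finset.card_insert_of_notMem (by grind), Finset.card_pair hab]
    have hab' : ({a, b} : Finset ℕ) ∈ Mk H Q m := by
      rw [mem_Mk]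
      refine ⟨Finset.card_pair hab, ?_, hGe ▸ hG⟩
      rw [Finset.disjoint_left]; grind
    have hmij : m = i ∨ m = j := by
      rw [hQe] at hmQ
      grind
    rcases hmij with rfl | rfl
    · have a1 := hcij _ he _ he2
      have a2 := hcij _ hab' _ he2
      have e2c := (mem_Mk.mp he2).1
      rw [Finset.not_disjoint_iff] at a1 a2
      obtain ⟨p, hp, hp2⟩ := a1
      obtain ⟨q, hq, hq2⟩ := a2
      have he2e := two_of e2c hp2 hq2 (by grind)
      have b1 := hcjk _ he2 _ hxa
      have b2 := hcjk _ he2 _ hxb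
      have b3 := hcjk _ he2 _ hyc
      have b4 := hcjk _ he2 _ hyd
      rw [he2e, Finset.not_disjoint_iff] at b1 b2 b3 b4
      simp only [Finset.mem_insert, Finset.mem_singleton] at b1 b2 b3 b4 hp hq
      rcases hp with rfl | rfl
      · rcases hq with rfl | rfl <;> grind
      · rcases hq with rfl | rfl <;> grind
    · have := hcij _ he _ hab'
      rw [Finset.not_disjoint_iff] at this
      grind

lemma pairs3 {a b c : ℕ} (hab : a ≠ b) (hac : a ≠ c) (hbc : b ≠ c) (f : Finset ℕ → ℕ) :
    ∑ p ∈ ({a, b, c} : Finset ℕ).powersetCard 2, f p = f {a, b} + f {a, c} + f {b, c} := by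
  have : ({a, b, c} : Finset ℕ).powersetCard 2 = {{a, b}, {a, c}, {b, c}} := by
    ext p
    rw [Finset.mem_powersetCard]
    simp only [Finset.mem_insert, Finset.mem_singleton]
    constructor
    · rintro ⟨h1, h2⟩
      obtain ⟨x, y, hxy, rfl⟩ := Finset.card_eq_two.mp h2
      have hx := h1 (show x ∈ {x, y} by simp)
      have hy := h1 (show y ∈ {x, y} by simp)
      simp only [Finset.mem_insert, Finset.mem_singleton] at hx hy
      rcases hx with rfl | rfl | rfl <;> rcases hy with rfl | rfl | rfl <;>
        simp_all [Finset.pair_comm]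
    · rintro (rfl | rfl | rfl)
      · exact ⟨by grind, Finset.card_pair hab⟩
      · exact ⟨by grind, Finset.card_pair hac⟩
      · exact ⟨by grind, Finset.card_pair hbc⟩
  rw [this]
  have h1 : ({a, b} : Finset ℕ) ≠ {a, c} := by
    intro h; have : b ∈ ({a, c} : Finset ℕ) := by rw [← h]; simp
    grind
  have h2 : ({a, b} : Finset ℕ) ≠ {b, c} := by
    intro h; have : a ∈ ({b, c} : Finset ℕ) := by rw [← h]; simp
    grind
  have h3 : ({a, c} : Finset ℕ) ≠ {b, c} := by
    intro h; have : a ∈ ({b, c} : Finset ℕ) := by rw [← h]; simp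
    grind
  rw [Finset.sum_insert (by simp [h1, h2]), Finset.sum_insert (by simp [h3]), Finset.sum_singleton]
  ring

lemma EL.main {H : Finset (Finset ℕ)} (hE : EL H) : H.card ≤ 10 := by
  obtain ⟨Q, hQ, -, -⟩ := hE.pp 0 0
  obtain ⟨a, b, c, hab, hac, hbc, hQe⟩ := Finset.card_eq_three.mp (hE.c3 Q hQ)
  have hc : Cov H Q := fun F hF => hE.n2 F hF Q hQ
  have hd := decomp hE.c3 hc
  have c1 := hE.claim hab hac hbc hQe hQ
  have c2 := hE.claim hac hab hbc.symm (by rw [hQe]; grind) hQ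
  have c3 := hE.claim hbc hab.symm hac.symm (by rw [hQe]; grind) hQ
  have t : (H.filter (fun F => F ⊆ Q)).card ≤ 1 := by
    have : H.filter (fun F => F ⊆ Q) ⊆ {Q} := by
      intro F hF
      rw [Finset.mem_filter] at hF
      rw [Finset.mem_singleton]
      exact Finset.eq_of_subset_of_card_le hF.2 (by rw [hE.c3 _ hF.1, hE.c3 _ hQ])
    simpa using Finset.card_le_card this
  have s1 : ∑ k ∈ Q, (Mk H Q k).card = (Mk H Q a).card + (Mk H Q b).card + (Mk H Q c).card := by
    conv_lhs => rw [hQe]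
    rw [Finset.sum_insert (by grind), Finset.sum_insert (by grind), Finset.sum_singleton, ← hQe]
    ring
  have s2 := pairs3 hab hac hbc (fun p => (Ev H Q p).card)
  rw [← hQe] at s2
  rw [s1, s2] at hd
  omega


def prs (A B : Finset ℕ) : Finset (Finset ℕ) := (A ×ˢ B).image (fun p => {p.1, p.2})

lemma prs_card (A B : Finset ℕ) : (prs A B).card ≤ A.card * B.card := by
  unfold prs
  exact Finset.card_image_le.trans (by rw [Finset.card_product])

lemma mem_prs {A B e : Finset ℕ} (he : e.card = 2) {a b : ℕ} (ha : a ∈ A) (hb : b ∈ B) (hab : a ≠ b)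
    (hae : a ∈ e) (hbe : b ∈ e) : e ∈ prs A B := by
  unfold prs
  rw [Finset.mem_image]
  exact ⟨(a, b), by simp [ha, hb], (two_of he hae hbe hab).symm⟩

lemma two_covers {M : Finset (Finset ℕ)} (hM : Gr M) (Z W : Finset ℕ)
    (hZ : ∀ e ∈ M, ¬ Disjoint e Z) (hW : ∀ e ∈ M, ¬ Disjoint e W) :
    M.card ≤ 4 * (Z ∩ W).card + (Z \ W).card * (W \ Z).card := by
  have h1 : M ⊆ M.filter (fun e => ¬ Disjoint e (Z ∩ W)) ∪ prs (Z \ W) (W \ Z) := by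
    intro e he
    rw [Finset.mem_union, Finset.mem_filter]
    by_cases hd : Disjoint e (Z ∩ W)
    · right
      have a := hZ e he
      have b := hW e he
      rw [Finset.not_disjoint_iff] at a b
      obtain ⟨z, hz, hz'⟩ := a
      obtain ⟨w, hw, hw'⟩ := b
      rw [Finset.disjoint_left] at hd
      have := hd hz
      have := hd hw
      exact mem_prs (hM.1 e he) (a := z) (b := w) (by grind) (by grind) (by grind) hz hw
    · exact Or.inl ⟨he, hd⟩
  have h2 := (Finset.card_le_card h1).trans (Finset.card_union_le _ _)
  have h3 := cover_bound (hM.subset (Finset.filter_subset (fun e => ¬ Disjoint e (Z ∩ W)) M)).2 (Z ∩ W)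
    (fun e he => (Finset.mem_filter.mp he).2)
  have h4 := prs_card (Z \ W) (W \ Z)
  omega

lemma Good.s13 {H : Finset (Finset ℕ)} (hG : Good H) {Q : Finset ℕ} (hQ : Cov H Q) (k : ℕ) (hk : k ∈ Q) :
    (Mk H Q k).card ≤ 13 := by
  by_contra hcon
  have hM := hG.gr hQ k
  have cov : ∀ A B : Finset ℕ, k ∉ A → k ∉ B → (∀ F ∈ H, ∃ z ∈ F, z ∈ A ∨ z ∈ B) →
      ∀ e ∈ Mk H Q k, ¬ Disjoint e ((A ∪ B) \ Q) := by
    intro A B h1 h2 h3 e he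
    rw [mem_Mk] at he
    have he2 := Finset.disjoint_left.mp he.2.1
    obtain ⟨z, hz, hz'⟩ := h3 _ he.2.2
    rw [Finset.not_disjoint_iff]
    exact ⟨z, by grind⟩
  obtain ⟨A, hA, B, hB, hAB, a1, a2, a3, a4, a5, a6⟩ := hG.pq hQ k k
  have cA := cov A B a1 a2 a6
  have : ((A ∪ B) \ Q).Nonempty := by
    rw [← Finset.card_pos]
    have := cover_bound hM.2 _ cA
    omega
  obtain ⟨z, hz⟩ := this
  obtain ⟨C, hC, D, hD, hCD, b1, b2, b3, b4, b5, b6⟩ := hG.pq hQ k z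
  have cC := cov C D b1 b2 b6
  set Z := (A ∪ B) \ Q with hZ
  set W := (C ∪ D) \ Q with hW
  have hzW : z ∉ W := by grind
  have tc := two_covers hM Z W cA cC
  have i1 := Finset.card_inter_add_card_sdiff Z W
  have i2 := Finset.card_inter_add_card_sdiff W Z
  rw [Finset.inter_comm] at i2
  have i3 : (Z \ W).card ≠ 0 := by
    rw [Finset.card_ne_zero]
    exact ⟨z, by grind⟩
  have key : (Z ∩ W).card = 0 ∧ (Z \ W).card = 4 ∧ (W \ Z).card = 4 := by
    generalize (Z ∩ W).card = i at *
    generalize (Z \ W).card = p at *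
    generalize (W \ Z).card = q at *
    have hp : p ≤ 4 := by omega
    have hq : q ≤ 4 := by omega
    interval_cases p <;> interval_cases q <;> omega
  have hdZW : ∀ v ∈ Z, v ∉ W := by
    intro v hv hv'
    have := Finset.card_eq_zero.mp key.1
    have h2 : v ∈ Z ∩ W := by grind
    rw [this] at h2; simp at h2
  have sA := sdiff_le2 hG.c3 hQ hA
  have sB := sdiff_le2 hG.c3 hQ hB
  have sC := sdiff_le2 hG.c3 hQ hC
  have sD := sdiff_le2 hG.c3 hQ hD
  have uAB : Z.card ≤ (A \ Q).card + (B \ Q).card := by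
    rw [hZ, Finset.union_sdiff_distrib]; exact Finset.card_union_le _ _
  have uCD : W.card ≤ (C \ Q).card + (D \ Q).card := by
    rw [hW, Finset.union_sdiff_distrib]; exact Finset.card_union_le _ _
  have q1 := Finset.card_inter_add_card_sdiff A Q
  have q2 := Finset.card_inter_add_card_sdiff B Q
  have q3 := Finset.card_inter_add_card_sdiff C Q
  rw [hG.c3 _ hA] at q1
  rw [hG.c3 _ hB] at q2
  rw [hG.c3 _ hC] at q3
  obtain ⟨a, ha⟩ := Finset.card_eq_one.mp (show (A ∩ Q).card = 1 by omega)
  obtain ⟨b, hb⟩ := Finset.card_eq_one.mp (show (B ∩ Q).card = 1 by omega)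
  obtain ⟨c, hc⟩ := Finset.card_eq_one.mp (show (C ∩ Q).card = 1 by omega)
  -- final
  have fin : ∀ X ∈ H, X \ Q ⊆ Z → (X \ Q).card = 2 → k ∉ X → Disjoint X C → False := by
    intro X hX hXZ hX2 hkX hXC
    have hsub : Mk H Q k ⊆ prs (X \ Q) W ∪ prs (Z \ (X \ Q)) (C \ Q) := by
      intro e he
      have e1 := cA e he
      have e2 := cC e he
      have ec := hM.1 e he
      have e5 : ∃ v ∈ e, v ∈ X ∨ v ∈ C := by
        by_contra hno
        push Not at hno
        rw [mem_Mk] at he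
        refine hG.n3 X hX C hC _ he.2.2 hXC ?_ ?_ <;> rw [Finset.disjoint_left] <;> grind
      have e6 := Finset.disjoint_left.mp (mem_Mk.mp he).2.1
      rw [Finset.not_disjoint_iff] at e1 e2
      obtain ⟨z1, h1, h1'⟩ := e1
      obtain ⟨w1, h2, h2'⟩ := e2
      have hzw : z1 ≠ w1 := by rintro rfl; exact hdZW _ h1' h2'
      have he' := two_of ec h1 h2 hzw
      rw [Finset.mem_union]
      by_cases hzX : z1 ∈ X
      · left
        exact mem_prs ec (a := z1) (b := w1) (by grind) h2' hzw h1 h2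
      · right
        refine mem_prs ec (a := z1) (b := w1) (by grind) ?_ hzw h1 h2
        obtain ⟨v, hv, hv'⟩ := e5
        have hvQ := e6 hv
        rw [he'] at hv
        simp only [Finset.mem_insert, Finset.mem_singleton] at hv
        have hCW : C \ Q ⊆ W := by intro t; grind
        rcases hv with rfl | rfl
        · have : v ∈ C := hv'.resolve_left hzX
          exact absurd (hCW (by grind)) (hdZW _ h1')
        · rcases hv' with hv' | hv'
          · exact absurd h2' (hdZW v (hXZ (by grind)))
          · grind
    have r1 := (Finset.card_le_card hsub).trans (Finset.card_union_le _ _)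
    have r2 := prs_card (X \ Q) W
    have r3 := prs_card (Z \ (X \ Q)) (C \ Q)
    rw [Finset.card_sdiff_of_subset hXZ] at r3
    have : Z.card = 4 := by omega
    have : W.card = 4 := by omega
    have : (C \ Q).card = 2 := by omega
    rw [hX2] at r2 r3
    generalize (C \ Q).card = c1 at *
    generalize W.card = c2 at *
    generalize Z.card = c3 at *
    subst c1 c2 c3
    omega
  have hAs : A \ Q ⊆ Z := by intro t; grind
  have hBs : B \ Q ⊆ Z := by intro t; grind
  have hCs : C \ Q ⊆ W := by intro t; grind
  have hA' : ∀ t, t ∈ A ∧ t ∈ Q ↔ t = a := by intro t; rw [← Finset.mem_inter, ha]; simp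
  have hB' : ∀ t, t ∈ B ∧ t ∈ Q ↔ t = b := by intro t; rw [← Finset.mem_inter, hb]; simp
  have hC' : ∀ t, t ∈ C ∧ t ∈ Q ↔ t = c := by intro t; rw [← Finset.mem_inter, hc]; simp
  have hab : a ≠ b := by
    rintro rfl
    exact Finset.disjoint_left.mp hAB ((hA' a).mpr rfl).1 ((hB' a).mpr rfl).1
  by_cases hac : a = c
  · refine fin B hB hBs (by omega) a2 ?_
    rw [Finset.disjoint_left]
    intro t ht htC
    by_cases htQ : t ∈ Q
    · have := (hB' t).mp ⟨ht, htQ⟩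
      have := (hC' t).mp ⟨htC, htQ⟩
      omega
    · exact hdZW t (hBs (by grind)) (hCs (by grind))
  · refine fin A hA hAs (by omega) a1 ?_
    rw [Finset.disjoint_left]
    intro t ht htC
    by_cases htQ : t ∈ Q
    · have := (hA' t).mp ⟨ht, htQ⟩
      have := (hC' t).mp ⟨htC, htQ⟩
      omega
    · exact hdZW t (hAs (by grind)) (hCs (by grind))

lemma sub14 {M N : Finset (Finset ℕ)} (hM : Gr M) (hN : Gr N) {X e0 f0 g : Finset ℕ}
    (hX : ∀ e ∈ M, ∀ f ∈ N, Disjoint e f → e ∪ f = X) (he0 : e0 ∈ M) (hf0 : f0 ∈ N)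
    (hef : Disjoint e0 f0) (hg : g ∈ M) (hgX : ¬ g ⊆ X) : M.card + N.card ≤ 14 := by
  have hX0 := hX e0 he0 f0 hf0 hef
  have hcr : ∀ f ∈ N, ¬ Disjoint g f := by
    intro f hf hd
    apply hgX
    rw [← hX g hg f hf hd]
    exact Finset.subset_union_left
  have hdl := Finset.disjoint_left.mp hef
  have h1 := hcr f0 hf0
  rw [Finset.not_disjoint_iff] at h1
  obtain ⟨u, hug, huf⟩ := h1
  obtain ⟨y, hy, hyX⟩ := Finset.not_subset.mp hgX
  have hge := two_of (hM.1 g hg) hug hy (by rintro rfl; apply hyX; rw [← hX0]; simp [huf])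
  have hN5 : N ⊆ {f0} ∪ prs e0 g := by
    intro f hf
    rw [Finset.mem_union, Finset.mem_singleton]
    by_cases hd : Disjoint e0 f
    · left
      have h2 := hX e0 he0 f hf hd
      rw [← hX0] at h2
      have hdl2 := Finset.disjoint_left.mp hd
      ext t
      have : t ∈ e0 ∪ f ↔ t ∈ e0 ∪ f0 := by rw [h2]
      grind
    · right
      have h3 := hcr f hf
      rw [Finset.not_disjoint_iff] at hd h3
      obtain ⟨a, ha, ha'⟩ := hd
      obtain ⟨b, hb, hb'⟩ := h3
      refine mem_prs (hN.1 f hf) ha hb ?_ ha' hb'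
      rintro rfl
      rw [hge] at hb
      simp only [Finset.mem_insert, Finset.mem_singleton] at hb
      rcases hb with rfl | rfl
      · exact hdl ha huf
      · apply hyX; rw [← hX0]; simp [ha]
  have hM9 : M ⊆ {e0} ∪ M.filter (fun e => ¬ Disjoint e f0) := by
    intro e he
    rw [Finset.mem_union, Finset.mem_singleton, Finset.mem_filter]
    by_cases hd : Disjoint e f0
    · left
      have h2 := hX e he f0 hf0 hd
      rw [← hX0] at h2
      have hdl2 := Finset.disjoint_left.mp hd
      ext t
      have : t ∈ e ∪ f0 ↔ t ∈ e0 ∪ f0 := by rw [h2]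
      grind
    · exact Or.inr ⟨he, hd⟩
  have r1 := (Finset.card_le_card hN5).trans (Finset.card_union_le _ _)
  have r2 := (Finset.card_le_card hM9).trans (Finset.card_union_le _ _)
  have r3 := prs_card e0 g
  have r4 := cover_bound (hM.subset (Finset.filter_subset (fun e => ¬ Disjoint e f0) M)).2 f0
    (fun e he => (Finset.mem_filter.mp he).2)
  rw [hM.1 _ he0, hM.1 _ hg] at r3
  rw [hN.1 _ hf0] at r4
  rw [Finset.card_singleton] at r1 r2
  omega

lemma rem_card {M : Finset (Finset ℕ)} (hM : Gr M) (w : ℕ) :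
    M.card ≤ 4 + (M.filter (fun e => w ∉ e)).card := by
  have := Finset.card_filter_add_card_filter_not (s := M) (fun e => w ∈ e)
  have := hM.2 w
  omega

lemma Good.mk_of {H : Finset (Finset ℕ)} (hG : Good H) {Q X : Finset ℕ} {k : ℕ} (hX : X ∈ H)
    (hkX : k ∈ X) (h : ∀ t ∈ X, t ∈ Q → t = k) : X.erase k ∈ Mk H Q k := by
  rw [mem_Mk]
  refine ⟨?_, ?_, ?_⟩
  · rw [Finset.card_erase_of_mem hkX, hG.c3 X hX]
  · rw [Finset.disjoint_left]; grind
  · rwa [Finset.insert_erase hkX]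

lemma Good.q4 {H : Finset (Finset ℕ)} (hG : Good H) {Q : Finset ℕ} (hQ : Cov H Q) {i j k l : ℕ}
    (hQe : Q = {i, j, k, l}) :
    ∃ e ∈ Mk H Q k, ∃ f ∈ Mk H Q l, Disjoint e f := by
  obtain ⟨A, hA, B, hB, hAB, a1, a2, a3, a4⟩ := hG.pp i j
  have cA := hQ A hA
  have cB := hQ B hB
  have hd := Finset.disjoint_left.mp hAB
  rw [Finset.not_disjoint_iff] at cA cB
  have : (k ∈ A ∧ l ∈ B) ∨ (l ∈ A ∧ k ∈ B) := by
    obtain ⟨x, hx, hx'⟩ := cA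
    obtain ⟨y, hy, hy'⟩ := cB
    have hxy : x ≠ y := by rintro rfl; exact hd hx hy
    rw [hQe] at hx' hy'
    simp only [Finset.mem_insert, Finset.mem_singleton] at hx' hy'
    rcases hx' with rfl | rfl | rfl | rfl <;> rcases hy' with rfl | rfl | rfl | rfl <;> tauto
  rcases this with ⟨h1, h2⟩ | ⟨h1, h2⟩
  · refine ⟨A.erase k, hG.mk_of hA h1 ?_, B.erase l, hG.mk_of hB h2 ?_, ?_⟩
    · rw [hQe]; grind
    · rw [hQe]; grind
    · rw [Finset.disjoint_left]; grind
  · refine ⟨B.erase k, hG.mk_of hB h2 ?_, A.erase l, hG.mk_of hA h1 ?_, ?_⟩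
    · rw [hQe]; grind
    · rw [hQe]; grind
    · rw [Finset.disjoint_left]; grind

lemma Good.remcr {H : Finset (Finset ℕ)} (hG : Good H) {Q : Finset ℕ} {k l i j : ℕ}
    (hk : k ∈ Q) (hl : l ∈ Q) (hi : i ∈ Q) (hj : j ∈ Q)
    (hkl : k ≠ l) (hki : k ≠ i) (hkj : k ≠ j) (hli : l ≠ i) (hlj : l ≠ j)
    {w : ℕ} (hw : w ∈ Ev H Q {i, j}) :
    Cr ((Mk H Q k).filter (fun e => w ∉ e)) ((Mk H Q l).filter (fun e => w ∉ e)) := by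
  intro e he f hf
  rw [Finset.mem_filter] at he hf
  exact hG.mme hk hl hi hj hkl hki hkj hli hlj he.1 hf.1 hw he.2 hf.2

lemma Good.c26 {H : Finset (Finset ℕ)} (hG : Good H) {Q : Finset ℕ} (hQ : Cov H Q) {i j k l : ℕ}
    (hQe : Q = {i, j, k, l}) (hij : i ≠ j) (hik : i ≠ k) (hil : i ≠ l) (hjk : j ≠ k) (hjl : j ≠ l)
    (hkl : k ≠ l) :
    3 * (Ev H Q {i, j}).card + (Mk H Q k).card + (Mk H Q l).card ≤ 26 := by
  have hi : i ∈ Q := by simp [hQe]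
  have hj : j ∈ Q := by simp [hQe]
  have hk : k ∈ Q := by simp [hQe]
  have hl : l ∈ Q := by simp [hQe]
  have k13 := hG.s13 hQ k hk
  have l13 := hG.s13 hQ l hl
  have e4 := hG.e4 hQ i j
  have gk := hG.gr hQ k
  have gl := hG.gr hQ l
  by_cases h0 : (Ev H Q {i, j}).card = 0
  · omega
  by_cases h4 : (Ev H Q {i, j}).card = 4
  · obtain ⟨e0, he0, f0, hf0, hd0⟩ := hG.q4 hQ hQe
    have hX : ∀ e ∈ Mk H Q k, ∀ f ∈ Mk H Q l, Disjoint e f → e ∪ f = Ev H Q {i, j} := by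
      intro e he f hf hd
      symm
      apply Finset.eq_of_subset_of_card_le
      · intro w hw
        by_contra hcon
        rw [Finset.mem_union] at hcon
        push Not at hcon
        exact hG.mme hk hl hi hj hkl hik.symm hjk.symm hil.symm hjl.symm he hf hw hcon.1 hcon.2 hd
      · have := Finset.card_union_le e f
        rw [gk.1 e he, gl.1 f hf] at this
        omega
    by_cases hk' : ∀ g ∈ Mk H Q k, g ⊆ Ev H Q {i, j}
    · by_cases hl' : ∀ g ∈ Mk H Q l, g ⊆ Ev H Q {i, j}
      · have r1 := tri_bd gk _ hk'
        have r2 := tri_bd gl _ hl'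
        rw [h4] at r1 r2
        have : Nat.choose 4 2 = 6 := rfl
        omega
      · push Not at hl'
        obtain ⟨g, hg, hgX⟩ := hl'
        have := sub14 gl gk (fun e he f hf hd => (Finset.union_comm e f).trans (hX f hf e he hd.symm)) hf0 he0 hd0.symm hg hgX
        omega
    · push Not at hk'
      obtain ⟨g, hg, hgX⟩ := hk'
      have := sub14 gk gl hX he0 hf0 hd0 hg hgX
      omega
  · obtain ⟨w, hw⟩ := Finset.card_pos.mp (Nat.pos_of_ne_zero h0)
    have hcr := hG.remcr hk hl hi hj hkl hik.symm hjk.symm hil.symm hjl.symm hw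
    have rk := rem_card gk w
    have rl := rem_card gl w
    have := cross_sum (gk.subset (Finset.filter_subset _ _)) (gl.subset (Finset.filter_subset _ _)) hcr
    omega

lemma pairs_insert {Q : Finset ℕ} {a : ℕ} (ha : a ∉ Q) (f : Finset ℕ → ℕ) :
    ∑ p ∈ (insert a Q).powersetCard 2, f p = ∑ p ∈ Q.powersetCard 2, f p + ∑ b ∈ Q, f {a, b} := by
  rw [Finset.powersetCard_succ_insert ha, Finset.sum_union, Finset.sum_image, Finset.powersetCard_one,
    Finset.sum_map]
  · rfl
  · intro x hx y hy hxy
    rw [Finset.mem_coe, Finset.mem_powersetCard] at hx hy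
    have h1 : a ∉ x := fun h => ha (hx.1 h)
    have h2 : a ∉ y := fun h => ha (hy.1 h)
    rw [← Finset.erase_insert h1, ← Finset.erase_insert h2, hxy]
  · rw [Finset.disjoint_left]
    intro p hp hp'
    rw [Finset.mem_powersetCard] at hp
    rw [Finset.mem_image] at hp'
    obtain ⟨q, hq, rfl⟩ := hp'
    exact ha (hp.1 (by simp))

lemma Good.tau4 {H : Finset (Finset ℕ)} (hG : Good H) {Q : Finset ℕ} (hQ : Cov H Q) (hQ4 : Q.card = 4) :
    H.card ≤ 56 := by
  obtain ⟨a, Q', haQ, hQ1, hQ3⟩ := Finset.card_eq_succ.mp hQ4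
  obtain ⟨b, c, d, hbc, hbd, hcd, rfl⟩ := Finset.card_eq_three.mp hQ3
  simp only [Finset.mem_insert, Finset.mem_singleton, not_or] at haQ
  obtain ⟨hab, hac, had⟩ := haQ
  have dd := decomp hG.c3 hQ
  have t : (H.filter (fun F => F ⊆ Q)).card ≤ 4 := by
    have : H.filter (fun F => F ⊆ Q) ⊆ Q.powersetCard 3 := by
      intro F hF
      rw [Finset.mem_filter] at hF
      exact Finset.mem_powersetCard.mpr ⟨hF.2, hG.c3 _ hF.1⟩
    have := Finset.card_le_card this
    rw [Finset.card_powersetCard, hQ4] at this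
    exact this
  have s1 : ∑ k ∈ Q, (Mk H Q k).card = (Mk H Q a).card + (Mk H Q b).card + (Mk H Q c).card + (Mk H Q d).card := by
    conv_lhs => rw [← hQ1]
    rw [Finset.sum_insert (by simp [*]), Finset.sum_insert (by simp [*]), Finset.sum_insert (by simp [*]), Finset.sum_singleton, hQ1]
    ring
  have s2 : ∑ p ∈ Q.powersetCard 2, (Ev H Q p).card = (Ev H Q {a,b}).card + (Ev H Q {a,c}).card + (Ev H Q {a,d}).card
     + (Ev H Q {b,c}).card + (Ev H Q {b,d}).card + (Ev H Q {c,d}).card := by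
    conv_lhs => rw [← hQ1]
    rw [pairs_insert (by simp [*]), pairs3 hbc hbd hcd, Finset.sum_insert (by simp [*]), Finset.sum_insert (by simp [*]), Finset.sum_singleton, hQ1]
    ring
  have c1 := hG.c26 hQ (i := a) (j := b) (k := c) (l := d) (by rw [← hQ1]) hab hac had hbc hbd hcd
  have c2 := hG.c26 hQ (i := a) (j := c) (k := b) (l := d) (by rw [← hQ1]; grind) hac hab had (Ne.symm hbc) hcd hbd
  have c3 := hG.c26 hQ (i := a) (j := d) (k := b) (l := c) (by rw [← hQ1]; grind) had hab hac (Ne.symm hbd) (Ne.symm hcd) hbc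
  have c4 := hG.c26 hQ (i := b) (j := c) (k := a) (l := d) (by rw [← hQ1]; grind) hbc (Ne.symm hab) hbd (Ne.symm hac) hcd had
  have c5 := hG.c26 hQ (i := b) (j := d) (k := a) (l := c) (by rw [← hQ1]; grind) hbd (Ne.symm hab) hbc (Ne.symm had) (Ne.symm hcd) hac
  have c6 := hG.c26 hQ (i := c) (j := d) (k := a) (l := b) (by rw [← hQ1]; grind) hcd (Ne.symm hac) (Ne.symm hbc) (Ne.symm had) (Ne.symm hbd) hab
  omega


lemma sdr1 {P R S : Finset ℕ} (hP : 1 ≤ P.card) (hR : 2 ≤ R.card) (hS : 3 ≤ S.card) :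
    ∃ x ∈ P, ∃ y ∈ R, ∃ z ∈ S, x ≠ y ∧ x ≠ z ∧ y ≠ z := by
  obtain ⟨x, hx⟩ := Finset.card_pos.mp hP
  obtain ⟨y, hy, hyx⟩ := Finset.exists_mem_ne (s := R) (by omega) x
  have h1 := Finset.pred_card_le_card_erase (s := S) (a := x)
  obtain ⟨z, hz, hzy⟩ := Finset.exists_mem_ne (s := S.erase x) (by omega) y
  rw [Finset.mem_erase] at hz
  exact ⟨x, hx, y, hy, z, hz.2, hyx.symm, hz.1.symm, hzy.symm⟩

lemma sdr_le {P R S : Finset ℕ} (h : ∀ x ∈ P, ∀ y ∈ R, ∀ z ∈ S, x ≠ y → x ≠ z → y ≠ z → False)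
    (hP : 1 ≤ P.card) (hR : 1 ≤ R.card) (hS : 1 ≤ S.card) (hP4 : P.card ≤ 4) (hR4 : R.card ≤ 4)
    (hS4 : S.card ≤ 4) : P.card + R.card + S.card ≤ 6 := by
  by_contra hc
  have : (2 ≤ R.card ∧ 3 ≤ S.card) ∨ (2 ≤ S.card ∧ 3 ≤ R.card) ∨ (2 ≤ P.card ∧ 3 ≤ S.card) ∨
    (2 ≤ S.card ∧ 3 ≤ P.card) ∨ (2 ≤ R.card ∧ 3 ≤ P.card) ∨ (2 ≤ P.card ∧ 3 ≤ R.card) := by omega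
  rcases this with ⟨a, b⟩ | ⟨a, b⟩ | ⟨a, b⟩ | ⟨a, b⟩ | ⟨a, b⟩ | ⟨a, b⟩
  · obtain ⟨x, hx, y, hy, z, hz, h1, h2, h3⟩ := sdr1 hP a b
    exact h x hx y hy z hz h1 h2 h3
  · obtain ⟨x, hx, y, hy, z, hz, h1, h2, h3⟩ := sdr1 hP a b
    exact h x hx z hz y hy h2 h1 h3.symm
  · obtain ⟨x, hx, y, hy, z, hz, h1, h2, h3⟩ := sdr1 hR a b
    exact h y hy x hx z hz h1.symm h3 h2
  · obtain ⟨x, hx, y, hy, z, hz, h1, h2, h3⟩ := sdr1 hR a b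
    exact h z hz x hx y hy h2.symm h3.symm h1
  · obtain ⟨x, hx, y, hy, z, hz, h1, h2, h3⟩ := sdr1 hS a b
    exact h z hz y hy x hx h3.symm h2.symm h1.symm
  · obtain ⟨x, hx, y, hy, z, hz, h1, h2, h3⟩ := sdr1 hS a b
    exact h y hy z hz x hx h3 h1.symm h2.symm

lemma Good.e0 {H : Finset (Finset ℕ)} (hG : Good H) (hN : ∀ Q : Finset ℕ, Q.card ≤ 4 → ¬ Cov H Q)
    {Q : Finset ℕ} (hQ : Cov H Q) {a b c d u v : ℕ} (hQe : Q = {a, b, c, d, u, v})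
    (hua : u ≠ a) (hub : u ≠ b) (huc : u ≠ c) (hud : u ≠ d)
    (hva : v ≠ a) (hvb : v ≠ b) (hvc : v ≠ c) (hvd : v ≠ d)
    (hac : a ≠ c) (had : a ≠ d) (hbc : b ≠ c) (hbd : b ≠ d) (huv : u ≠ v)
    (h0 : (Ev H Q {u, v}).card = 0) : (Ev H Q {a, b}).card + (Ev H Q {c, d}).card ≤ 6 := by
  have ha : a ∈ Q := by simp [hQe]
  have hb : b ∈ Q := by simp [hQe]
  have hc : c ∈ Q := by simp [hQe]
  have hd : d ∈ Q := by simp [hQe]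
  have hu : u ∈ Q := by simp [hQe]
  have hv : v ∈ Q := by simp [hQe]
  have := hN {a, b, c, d} Finset.card_le_four
  unfold Cov at this
  push Not at this
  obtain ⟨F, hF, hFd⟩ := this
  simp only [Finset.disjoint_right, Finset.mem_insert, Finset.mem_singleton, forall_eq_or_imp, forall_eq] at hFd
  have hFQ := hQ F hF
  rw [Finset.not_disjoint_iff] at hFQ
  have e1 := hG.e4 hQ a b
  have e2 := hG.e4 hQ c d
  have huv' : u ∈ F ∨ v ∈ F := by
    obtain ⟨x, hx, hx'⟩ := hFQ
    rw [hQe] at hx'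
    simp only [Finset.mem_insert, Finset.mem_singleton] at hx'
    rcases hx' with rfl | rfl | rfl | rfl | rfl | rfl <;> tauto
  have hnot : ¬ (u ∈ F ∧ v ∈ F) := by
    rintro ⟨h1, h2⟩
    have hcard : ((F.erase u).erase v).card = 1 := by
      rw [Finset.card_erase_of_mem (by simp [h2, huv.symm]), Finset.card_erase_of_mem h1, hG.c3 F hF]
    obtain ⟨w, hw⟩ := Finset.card_eq_one.mp hcard
    have hwF : w ∈ (F.erase u).erase v := by rw [hw]; simp
    simp only [Finset.mem_erase] at hwF
    have : w ∈ Ev H Q {u, v} := by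
      rw [mem_Ev]
      constructor
      · rw [hQe]
        simp only [Finset.mem_insert, Finset.mem_singleton]
        rintro (rfl | rfl | rfl | rfl | rfl | rfl) <;> tauto
      · have : insert w {u, v} = F := by
          apply Finset.eq_of_subset_of_card_le
          · intro z; grind
          · rw [hG.c3 F hF, Finset.card_insert_of_notMem (by grind), Finset.card_pair huv]
        rwa [this]
    rw [Finset.card_eq_zero] at h0
    rw [h0] at this
    simp at this
  by_cases huF : u ∈ F
  · have hvF : v ∉ F := fun h => hnot ⟨huF, h⟩
    have hm : F.erase u ∈ Mk H Q u := by
      apply hG.mk_of hF huF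
      intro t ht htQ
      rw [hQe] at htQ
      simp only [Finset.mem_insert, Finset.mem_singleton] at htQ
      rcases htQ with rfl | rfl | rfl | rfl | rfl | rfl <;> tauto
    exact ga (hG.gr hQ u) (hG.mee hu ha hb hc hd hua hub huc hud hac had hbc hbd)
      (Finset.card_pos.mpr ⟨_, hm⟩) e1 e2
  · have hvF : v ∈ F := huv'.resolve_left huF
    have hm : F.erase v ∈ Mk H Q v := by
      apply hG.mk_of hF hvF
      intro t ht htQ
      rw [hQe] at htQ
      simp only [Finset.mem_insert, Finset.mem_singleton] at htQ
      rcases htQ with rfl | rfl | rfl | rfl | rfl | rfl <;> tauto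
    exact ga (hG.gr hQ v) (hG.mee hv ha hb hc hd hva hvb hvc hvd hac had hbc hbd)
      (Finset.card_pos.mpr ⟨_, hm⟩) e1 e2

lemma Good.m6 {H : Finset (Finset ℕ)} (hG : Good H) (hN : ∀ Q : Finset ℕ, Q.card ≤ 4 → ¬ Cov H Q)
    {Q : Finset ℕ} (hQ : Cov H Q) {a b c d u v : ℕ} (hQe : Q = {a, b, c, d, u, v})
    (hua : u ≠ a) (hub : u ≠ b) (huc : u ≠ c) (hud : u ≠ d)
    (hva : v ≠ a) (hvb : v ≠ b) (hvc : v ≠ c) (hvd : v ≠ d)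
    (hac : a ≠ c) (had : a ≠ d) (hbc : b ≠ c) (hbd : b ≠ d) (huv : u ≠ v) (hab : a ≠ b) (hcd : c ≠ d) :
    (Ev H Q {a, b}).card + (Ev H Q {c, d}).card + (Ev H Q {u, v}).card ≤ 6 := by
  have ha : a ∈ Q := by simp [hQe]
  have hb : b ∈ Q := by simp [hQe]
  have hc : c ∈ Q := by simp [hQe]
  have hd : d ∈ Q := by simp [hQe]
  have hu : u ∈ Q := by simp [hQe]
  have hv : v ∈ Q := by simp [hQe]
  have e1 := hG.e4 hQ a b
  have e2 := hG.e4 hQ c d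
  have e3 := hG.e4 hQ u v
  have z1 := hG.e0 hN hQ hQe hua hub huc hud hva hvb hvc hvd hac had hbc hbd huv
  have z2 := hG.e0 hN hQ (a := a) (b := b) (c := u) (d := v) (u := c) (v := d) (by rw [hQe]; ext t; simp only [Finset.mem_insert, Finset.mem_singleton]; grind)
    hac.symm hbc.symm huc.symm hvc.symm had.symm hbd.symm hud.symm hvd.symm hua.symm hva.symm hub.symm hvb.symm hcd
  have z3 := hG.e0 hN hQ (a := c) (b := d) (c := u) (d := v) (u := a) (v := b) (by rw [hQe]; ext t; simp only [Finset.mem_insert, Finset.mem_singleton]; grind)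
    hac had hua.symm hva.symm hbc hbd hub.symm hvb.symm huc.symm hvc.symm hud.symm hvd.symm hab
  have s := sdr_le (P := Ev H Q {a, b}) (R := Ev H Q {c, d}) (S := Ev H Q {u, v}) (fun x hx y hy z hz h1 h2 h3 =>
    hG.eee ha hb hc hd hu hv hua hub huc hud hva hvb hvc hvd hac had hbc hbd hx hy hz h1 h2 h3)
  omega

lemma Good.step3 {H : Finset (Finset ℕ)} (hG : Good H) (hN : ∀ Q : Finset ℕ, Q.card ≤ 4 → ¬ Cov H Q)
    {A B : Finset ℕ} (hA : A ∈ H) (hB : B ∈ H) (hAB : Disjoint A B) :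
    H.card ≤ (H.filter (fun F => Disjoint F A)).card + (H.filter (fun F => Disjoint F B)).card + 36 := by
  have hQ : Cov H (A ∪ B) := by
    intro F hF hd
    rw [Finset.disjoint_union_right] at hd
    exact hG.n3 A hA B hB F hF hAB hd.1.symm hd.2.symm
  set Q := A ∪ B with hQd
  have hdl := Finset.disjoint_left.mp hAB
  have hsub : H ⊆ (H.filter (fun F => Disjoint F A) ∪ H.filter (fun F => Disjoint F B)) ∪
      (((Q.powersetCard 3).erase A).erase B ∪
      A.biUnion (fun a => B.biUnion (fun b => (Ev H Q {a, b}).image (fun w => insert w {a, b})))) := by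
    intro F hF
    by_cases h1 : Disjoint F A
    · simp [hF, h1]
    by_cases h2 : Disjoint F B
    · simp [hF, h2]
    apply Finset.mem_union_right
    by_cases h3 : F ⊆ Q
    · apply Finset.mem_union_left
      simp only [Finset.mem_erase, Finset.mem_powersetCard]
      refine ⟨?_, ?_, h3, hG.c3 F hF⟩
      · rintro rfl; exact h1 hAB.symm
      · rintro rfl; exact h2 hAB
    · apply Finset.mem_union_right
      obtain ⟨w, hw, hwQ⟩ := Finset.not_subset.mp h3
      rw [Finset.not_disjoint_iff] at h1 h2
      obtain ⟨a, haF, haA⟩ := h1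
      obtain ⟨b, hbF, hbB⟩ := h2
      have hab : a ≠ b := by rintro rfl; exact hdl haA hbB
      simp only [Finset.mem_biUnion, Finset.mem_image]
      have : insert w {a, b} = F := by
        apply Finset.eq_of_subset_of_card_le
        · intro z; grind
        · rw [hG.c3 F hF, Finset.card_insert_of_notMem (by grind), Finset.card_pair hab]
      exact ⟨a, haA, b, hbB, w, mem_Ev.mpr ⟨hwQ, by rwa [this]⟩, this⟩
  have hcQ : Q.card = 6 := by
    rw [hQd, Finset.card_union_of_disjoint hAB, hG.c3 A hA, hG.c3 B hB]
  have hneAB : A ≠ B := by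
    rintro rfl
    have := hG.c3 A hA
    rw [disjoint_self] at hAB
    rw [hAB] at this; simp at this
  have h18 : (((Q.powersetCard 3).erase A).erase B).card = 18 := by
    rw [Finset.card_erase_of_mem, Finset.card_erase_of_mem, Finset.card_powersetCard, hcQ]
    · rfl
    · rw [Finset.mem_powersetCard]; exact ⟨Finset.subset_union_left, hG.c3 A hA⟩
    · rw [Finset.mem_erase, Finset.mem_powersetCard]
      exact ⟨hneAB.symm, Finset.subset_union_right, hG.c3 B hB⟩
  have hs : (A.biUnion (fun a => B.biUnion (fun b => (Ev H Q {a, b}).image (fun w => (insert w {a, b} : Finset ℕ))))).card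
      ≤ ∑ a ∈ A, ∑ b ∈ B, (Ev H Q {a, b}).card := by
    refine Finset.card_biUnion_le.trans (Finset.sum_le_sum fun a _ => ?_)
    exact Finset.card_biUnion_le.trans (Finset.sum_le_sum fun b _ => Finset.card_image_le)
  have hs2 : ∑ a ∈ A, ∑ b ∈ B, (Ev H Q {a, b}).card ≤ 18 := by
    obtain ⟨a, b, c, hab, hac, hbc, hAe⟩ := Finset.card_eq_three.mp (hG.c3 A hA)
    obtain ⟨x, y, z, hxy, hxz, hyz, hBe⟩ := Finset.card_eq_three.mp (hG.c3 B hB)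
    have hne : ∀ s ∈ A, ∀ t ∈ B, s ≠ t := by rintro s hs t ht rfl; exact hdl hs ht
    have hQm : ∀ t, t ∈ Q ↔ (t = a ∨ t = b ∨ t = c) ∨ (t = x ∨ t = y ∨ t = z) := by
      intro t; rw [hQd, Finset.mem_union, hAe, hBe]; simp
    have hax := hne a (by simp [hAe]) x (by simp [hBe])
    have hay := hne a (by simp [hAe]) y (by simp [hBe])
    have haz := hne a (by simp [hAe]) z (by simp [hBe])
    have hbx := hne b (by simp [hAe]) x (by simp [hBe])
    have hby := hne b (by simp [hAe]) y (by simp [hBe])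
    have hbz := hne b (by simp [hAe]) z (by simp [hBe])
    have hcx := hne c (by simp [hAe]) x (by simp [hBe])
    have hcy := hne c (by simp [hAe]) y (by simp [hBe])
    have hcz := hne c (by simp [hAe]) z (by simp [hBe])
    have q1 := hG.m6 hN hQ (a := a) (b := x) (c := b) (d := y) (u := c) (v := z)
      (by ext t; rw [hQm]; simp only [Finset.mem_insert, Finset.mem_singleton]; grind)
      hac.symm hcx hbc.symm hcy haz.symm hxz.symm hbz.symm hyz.symm hab hay hbx.symm hxy hcz hax hby
    have q2 := hG.m6 hN hQ (a := a) (b := y) (c := b) (d := z) (u := c) (v := x)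
      (by ext t; rw [hQm]; simp only [Finset.mem_insert, Finset.mem_singleton]; grind)
      hac.symm hcy hbc.symm hcz hax.symm hxy hbx.symm hxz hab haz hby.symm hyz hcx hay hbz
    have q3 := hG.m6 hN hQ (a := a) (b := z) (c := b) (d := x) (u := c) (v := y)
      (by ext t; rw [hQm]; simp only [Finset.mem_insert, Finset.mem_singleton]; grind)
      hac.symm hcz hbc.symm hcx hay.symm hyz hby.symm hxy.symm hab hax hbz.symm hxz.symm hcy haz hbx
    have e : ∑ a ∈ A, ∑ b ∈ B, (Ev H Q {a, b}).card = 
      ((Ev H Q {a, x}).card + ((Ev H Q {a, y}).card + (Ev H Q {a, z}).card)) +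
      (((Ev H Q {b, x}).card + ((Ev H Q {b, y}).card + (Ev H Q {b, z}).card)) +
      ((Ev H Q {c, x}).card + ((Ev H Q {c, y}).card + (Ev H Q {c, z}).card))) := by
      have : ∀ s, ∑ b ∈ B, (Ev H Q {s, b}).card = (Ev H Q {s, x}).card + ((Ev H Q {s, y}).card + (Ev H Q {s, z}).card) := by
        intro s
        conv_lhs => rw [hBe]
        rw [Finset.sum_insert (by simp [hxy, hxz]), Finset.sum_insert (by simp [hyz]), Finset.sum_singleton]
      simp only [this]
      conv_lhs => rw [hAe]
      rw [Finset.sum_insert (by simp [hab, hac]), Finset.sum_insert (by simp [hbc]), Finset.sum_singleton]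
    omega
  have c1 := (Finset.card_le_card hsub).trans (Finset.card_union_le _ _)
  have c2 := Finset.card_union_le (H.filter (fun F => Disjoint F A)) (H.filter (fun F => Disjoint F B))
  have c3 := Finset.card_union_le (((Q.powersetCard 3).erase A).erase B) (A.biUnion (fun a => B.biUnion (fun b => (Ev H Q {a, b}).image (fun w => insert w {a, b}))))
  omega


lemma Good.no81 {H : Finset (Finset ℕ)} (hG : Good H) {Q : Finset ℕ} (hQ : Cov H Q) {u v : ℕ}
    (hu : u ∈ Q) (hv : v ∈ Q) (huv : u ≠ v) (hcr : Cr (Mk H Q v) (Mk H Q u))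
    (h8 : (Mk H Q u).card = 8) (h1 : (Mk H Q v).card = 1) : False := by
  obtain ⟨e, he⟩ := Finset.card_eq_one.mp h1
  have hev : e ∈ Mk H Q v := by rw [he]; simp
  have hem := mem_Mk.mp hev
  obtain ⟨x, y, hxy, rfl⟩ := Finset.card_eq_two.mp hem.1
  have hun : Mk H Q u = (Mk H Q u).filter (fun e => x ∈ e) ∪ (Mk H Q u).filter (fun e => y ∈ e) := by
    ext f
    have := hcr _ hev f
    rw [Finset.not_disjoint_iff] at this
    simp only [Finset.mem_union, Finset.mem_filter]
    grind
  have hcu := Finset.card_union_add_card_inter ((Mk H Q u).filter (fun e => x ∈ e)) ((Mk H Q u).filter (fun e => y ∈ e))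
  rw [← hun] at hcu
  have gu := hG.gr hQ u
  have dx := gu.2 x
  have dy := gu.2 y
  have hint : ((Mk H Q u).filter (fun e => x ∈ e) ∩ (Mk H Q u).filter (fun e => y ∈ e)) = ∅ := by
    rw [← Finset.card_eq_zero]; omega
  have hno : ({x, y} : Finset ℕ) ∉ Mk H Q u := by
    intro hh
    have : ({x, y} : Finset ℕ) ∈ ((Mk H Q u).filter (fun e => x ∈ e) ∩ (Mk H Q u).filter (fun e => y ∈ e)) := by
      simp [hh]
    rw [hint] at this; simp at this
  have hx4 : ((Mk H Q u).filter (fun e => x ∈ e)).card = 4 := by omega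
  obtain ⟨C, hC, D, hD, hCD, a1, a2, a3, a4, a5, a6⟩ := hG.pq hQ u x
  have hsub : (Mk H Q u).filter (fun e => x ∈ e) ⊆ (((C ∪ D) \ Q).erase y).image (fun z => {x, z}) := by
    intro f hf
    rw [Finset.mem_filter] at hf
    have hfm := mem_Mk.mp hf.1
    obtain ⟨z, hz, hz'⟩ := a6 _ hfm.2.2
    have hzu : z ≠ u := by rintro rfl; tauto
    have hzx : z ≠ x := by rintro rfl; tauto
    have hzf : z ∈ f := by grind
    have hfe := two_of hfm.1 hf.2 hzf hzx.symm
    have hzy : z ≠ y := by rintro rfl; apply hno; rw [← hfe]; exact hf.1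
    have hzQ := Finset.disjoint_left.mp hfm.2.1 hzf
    rw [Finset.mem_image]
    exact ⟨z, by grind, hfe.symm⟩
  have h4 := (Finset.card_le_card hsub).trans Finset.card_image_le
  rw [hx4] at h4
  have hyU : y ∉ (C ∪ D) \ Q := by
    intro hh
    rw [Finset.card_erase_of_mem hh] at h4
    omega
  rw [Finset.erase_eq_of_notMem hyU] at h4
  have hyQ : y ∉ Q := Finset.disjoint_left.mp hem.2.1 (by simp)
  have sC := sdiff_le2 hG.c3 hQ hC
  have sD := sdiff_le2 hG.c3 hQ hD
  have uCD : ((C ∪ D) \ Q).card ≤ (C \ Q).card + (D \ Q).card := by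
    rw [Finset.union_sdiff_distrib]; exact Finset.card_union_le _ _
  obtain ⟨z, hz, hz'⟩ := a6 _ hem.2.2
  have fin : ∀ X ∈ H, v ∈ X → x ∉ X → (X \ Q).card = 2 → False := by
    intro X hX hvX hxX hX2
    have q1 := Finset.card_inter_add_card_sdiff X Q
    rw [hG.c3 X hX] at q1
    obtain ⟨c, hc⟩ := Finset.card_eq_one.mp (show (X ∩ Q).card = 1 by omega)
    have hX' : ∀ t, t ∈ X ∧ t ∈ Q ↔ t = c := by intro t; rw [← Finset.mem_inter, hc]; simp
    have hvc := (hX' v).mp ⟨hvX, hv⟩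
    have := hG.mk_of (Q := Q) hX hvX (fun t ht htQ => by rw [hvc]; exact (hX' t).mp ⟨ht, htQ⟩)
    rw [he, Finset.mem_singleton] at this
    have hx : x ∈ X.erase v := by rw [this]; simp
    exact hxX (Finset.mem_of_mem_erase hx)
  have hzv : z = v := by
    simp only [Finset.mem_insert, Finset.mem_singleton] at hz
    rcases hz with rfl | rfl | rfl
    · rfl
    · tauto
    · exact absurd (by grind) hyU
  subst hzv
  rcases hz' with h | h
  · exact fin C hC h a3 (by omega)
  · exact fin D hD h a4 (by omega)

lemma Good.ne5 {H : Finset (Finset ℕ)} (hG : Good H) (hN : ∀ Q : Finset ℕ, Q.card ≤ 4 → ¬ Cov H Q)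
    {Q : Finset ℕ} (hQ : Cov H Q) (hQ5 : Q.card = 5) {k : ℕ} (hk : k ∈ Q) : 1 ≤ (Mk H Q k).card := by
  have := hN (Q.erase k) (by rw [Finset.card_erase_of_mem hk]; omega)
  unfold Cov at this
  push Not at this
  obtain ⟨F, hF, hd⟩ := this
  have hm := hQ F hF
  rw [Finset.not_disjoint_iff] at hm
  rw [Finset.disjoint_left] at hd
  obtain ⟨t, htF, htQ⟩ := hm
  have h1 : ∀ s ∈ F, s ∈ Q → s = k := by
    intro s hs hsQ
    have := hd hs
    grind
  have htk := h1 t htF htQ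
  subst htk
  exact Finset.card_pos.mpr ⟨_, hG.mk_of hF htF h1⟩

/-- numeric crossing facts -/
def CrN (s t : ℕ) : Prop := s ≤ 8 ∧ t ≤ 8 ∧ (2 ≤ s → t ≤ 5) ∧ (3 ≤ s → t ≤ 4) ∧ (2 ≤ t → s ≤ 5) ∧ (3 ≤ t → s ≤ 4)

lemma crn {M N : Finset (Finset ℕ)} (hM : Gr M) (hN : Gr N) (h : Cr M N)
    (h1 : 1 ≤ M.card) (h2 : 1 ≤ N.card) : CrN M.card N.card :=
  ⟨cross1 hN hM h.symm h2, cross1 hM hN h h1, cross2 hM hN h, cross3 hM hN h, cross2 hN hM h.symm, cross3 hN hM h.symm⟩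

def LG (s p r : ℕ) : Prop := p + r ≤ 6 ∧ (6 ≤ p + r → s ≤ 1 ∨ (p = 3 ∧ r = 3 ∧ s ≤ 3)) ∧
  (5 ≤ p + r → s ≤ 4) ∧ (3 ≤ p → 1 ≤ r → s ≤ 5) ∧ (3 ≤ r → 1 ≤ p → s ≤ 5) ∧ (2 ≤ r → 1 ≤ p → s ≤ 8)

noncomputable def ind (H : Finset (Finset ℕ)) (Q p : Finset ℕ) : ℕ := if Q \ p ∈ H then 1 else 0

lemma ind_le (H : Finset (Finset ℕ)) (Q p : Finset ℕ) : ind H Q p ≤ 1 := by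
  unfold ind; split_ifs <;> omega

lemma t_le {H : Finset (Finset ℕ)} (h3 : ∀ F ∈ H, F.card = 3) {Q : Finset ℕ} (hQ5 : Q.card = 5) :
    (H.filter (fun F => F ⊆ Q)).card ≤ ∑ p ∈ Q.powersetCard 2, ind H Q p := by
  unfold ind
  rw [← Finset.card_filter]
  apply Finset.card_le_card_of_injOn (fun F => Q \ F)
  · intro F hF
    rw [Finset.mem_coe, Finset.mem_filter] at hF
    rw [Finset.mem_coe, Finset.mem_filter, Finset.mem_powersetCard, Finset.card_sdiff_of_subset hF.2, h3 F hF.1, hQ5,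
      Finset.sdiff_sdiff_eq_self hF.2]
    exact ⟨⟨Finset.sdiff_subset, rfl⟩, hF.1⟩
  · intro F hF G hG' h
    rw [Finset.mem_coe, Finset.mem_filter] at hF hG'
    simp only at h
    rw [← Finset.sdiff_sdiff_eq_self hF.2, h, Finset.sdiff_sdiff_eq_self hG'.2]

lemma Good.indcr {H : Finset (Finset ℕ)} (hG : Good H) {Q : Finset ℕ} (hQ : Cov H Q) {k l : ℕ}
    (hk : k ∈ Q) (hl : l ∈ Q) (hkl : k ≠ l) (sk : 1 ≤ (Mk H Q k).card) (sl : 1 ≤ (Mk H Q l).card) :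
    1 ≤ ind H Q {k, l} → CrN (Mk H Q k).card (Mk H Q l).card := by
  intro h
  unfold ind at h
  split_ifs at h with hh
  · exact crn (hG.gr hQ k) (hG.gr hQ l) (hG.mma hk hl hkl hh Finset.sdiff_subset (by simp) (by simp)) sk sl
  · omega

lemma Good.e45 {H : Finset (Finset ℕ)} (hG : Good H) {Q : Finset ℕ} (hQ : Cov H Q) {k l i j : ℕ}
    (hk : k ∈ Q) (hl : l ∈ Q) (hi : i ∈ Q) (hj : j ∈ Q)
    (hkl : k ≠ l) (hki : k ≠ i) (hkj : k ≠ j) (hli : l ≠ i) (hlj : l ≠ j)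
    (sl : 1 ≤ (Mk H Q l).card)
    (h3 : 3 ≤ (Ev H Q {i, j}).card) : (Mk H Q k).card ≤ 12 ∧
      (5 ≤ (Mk H Q k).card → 5 ≤ (Mk H Q l).card → (Mk H Q k).card + (Mk H Q l).card ≤ 17) := by
  have gk := hG.gr hQ k
  have gl := hG.gr hQ l
  obtain ⟨e, he⟩ := Finset.card_pos.mp sl
  have : ∃ w ∈ Ev H Q {i, j}, w ∉ e := by
    by_contra hc
    push Not at hc
    have := Finset.card_le_card (show Ev H Q {i, j} ⊆ e from hc)
    rw [gl.1 e he] at this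
    omega
  obtain ⟨w, hw, hwe⟩ := this
  have hcr := hG.remcr hk hl hi hj hkl hki hkj hli hlj hw
  have rk := rem_card gk w
  have rl := rem_card gl w
  have gk' := gk.subset (Finset.filter_subset (fun e => w ∉ e) _)
  have gl' := gl.subset (Finset.filter_subset (fun e => w ∉ e) _)
  have c := cross_sum gk' gl' hcr
  have c1 := cross1 gl' gk' hcr.symm (Finset.card_pos.mpr ⟨e, by simp [he, hwe]⟩)
  constructor
  · omega
  · intro h5 h6; omega

lemma dA_le {H : Finset (Finset ℕ)} (h3 : ∀ F ∈ H, F.card = 3) {Q A : Finset ℕ} (hQ : Cov H Q) {x y : ℕ}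
    (hQe : Q = A ∪ {x, y}) (hxy : x ≠ y) :
    (H.filter (fun F => Disjoint F A)).card ≤ (Mk H Q x).card + (Mk H Q y).card + (Ev H Q {x, y}).card := by
  have hsub : H.filter (fun F => Disjoint F A) ⊆ ((Mk H Q x).image (fun e => insert x e) ∪
      (Mk H Q y).image (fun e => insert y e)) ∪ (Ev H Q {x, y}).image (fun w => insert w {x, y}) := by
    intro F hF
    rw [Finset.mem_filter] at hF
    obtain ⟨hF, hd⟩ := hF
    have hdl := Finset.disjoint_left.mp hd
    have hm := hQ F hF
    rw [Finset.not_disjoint_iff] at hm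
    have hor : x ∈ F ∨ y ∈ F := by
      obtain ⟨t, ht, ht'⟩ := hm
      have := hdl ht
      grind
    have aux : ∀ u v, Q = A ∪ {u, v} → u ∈ F → v ∉ F → F ∈ (Mk H Q u).image (fun e => insert u e) := by
      intro u v hQ' hu hv
      rw [Finset.mem_image]
      refine ⟨F.erase u, ?_, Finset.insert_erase hu⟩
      rw [mem_Mk, Finset.card_erase_of_mem hu, h3 F hF, Finset.insert_erase hu]
      refine ⟨rfl, ?_, hF⟩
      rw [Finset.disjoint_left]
      intro t ht
      have := hdl (Finset.mem_of_mem_erase ht)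
      rw [hQ']
      grind
    rw [Finset.mem_union, Finset.mem_union]
    by_cases hx : x ∈ F
    · by_cases hy : y ∈ F
      · right
        have hcard : ((F.erase x).erase y).card = 1 := by
          rw [Finset.card_erase_of_mem (by simp [hy, hxy.symm]), Finset.card_erase_of_mem hx, h3 F hF]
        obtain ⟨w, hw⟩ := Finset.card_eq_one.mp hcard
        have hwF : w ∈ (F.erase x).erase y := by rw [hw]; simp
        simp only [Finset.mem_erase] at hwF
        have he : insert w {x, y} = F := by
          apply Finset.eq_of_subset_of_card_le
          · intro z; grind
          · rw [h3 F hF, Finset.card_insert_of_notMem (by grind), Finset.card_pair hxy]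
        rw [Finset.mem_image]
        refine ⟨w, mem_Ev.mpr ⟨?_, by rwa [he]⟩, he⟩
        have := hdl hwF.2.2
        grind
      · exact Or.inl (Or.inl (aux x y hQe hx hy))
    · have hy := hor.resolve_left hx
      exact Or.inl (Or.inr (aux y x (by rw [hQe, Finset.pair_comm]) hy hx))
  have c1 := (Finset.card_le_card hsub).trans (Finset.card_union_le _ _)
  have c2 := Finset.card_union_le ((Mk H Q x).image (fun e => insert x e)) ((Mk H Q y).image (fun e => insert y e))
  have c3 := Finset.card_image_le (s := Mk H Q x) (f := fun e => insert x e)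
  have c4 := Finset.card_image_le (s := Mk H Q y) (f := fun e => insert y e)
  have c5 := Finset.card_image_le (s := Ev H Q {x, y}) (f := fun w => (insert w {x, y} : Finset ℕ))
  omega



lemma lgA {s P R : ℕ} (h1 : 1 ≤ s) (l : LG s P R) :
    (s ≤ 5 → s + P + R ≤ 9) ∧ (6 ≤ s → P + R ≤ 4) ∧ (s ≤ 3 → 9 ≤ s + P + R → P = 3 ∧ R = 3) ∧
    (4 ≤ s → P + R ≤ 5) := by
  obtain ⟨a, b, c, -, -, -⟩ := l
  refine ⟨?_, ?_, ?_, ?_⟩ <;> omega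

lemma lgB {s e g : ℕ} (l : LG s e g) (hg : 3 ≤ g) :
    (6 ≤ s → e = 0) ∧ e + g ≤ 6 ∧ (3 ≤ e → s ≤ 3) := by
  obtain ⟨a, b, c, -, d, -⟩ := l
  refine ⟨?_, ?_, ?_⟩ <;> omega

/-- summary of one vertex: `s`, eps `e`, cross sum `σ`. -/
def Lc (s e g σ : ℕ) : Prop := (s ≤ 5 → 2 * s + σ ≤ 18) ∧ (6 ≤ s → e = 0 ∧ σ ≤ 8) ∧ e + g ≤ 6 ∧ (3 ≤ e → s ≤ 3)

lemma lc {s e g P R P' R' : ℕ} (h1 : 1 ≤ s) (l1 : LG s e g) (l2 : LG s P R) (l3 : LG s P' R') (hg : 3 ≤ g) :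
    Lc s e g (P + R + P' + R') := by
  obtain ⟨a1, a2, -, -⟩ := lgA h1 l2
  obtain ⟨b1, b2, -, -⟩ := lgA h1 l3
  obtain ⟨c1, c2, c3⟩ := lgB l1 hg
  refine ⟨?_, ?_, c2, c3⟩
  · intro h; have := a1 h; have := b1 h; omega
  · intro h; have := a2 h; have := b2 h; have := c1 h; omega

lemma small_case {h t u g s1 s2 s3 e1 e2 e3 σ1 σ2 σ3 : ℕ} (ht : t ≤ 10) (hu : u ≤ 8) (hg : 3 ≤ g) (hg4 : g ≤ 4)
    (l1 : Lc s1 e1 g σ1) (l2 : Lc s2 e2 g σ2) (l3 : Lc s3 e3 g σ3)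
    (b1 : s1 ≤ 5) (b2 : s2 ≤ 5) (b3 : s3 ≤ 5)
    (hne : ¬ (e1 = 3 ∧ e2 = 3 ∧ e3 = 3))
    (hh : 2 * h ≤ 2 * t + 2 * u + 2 * g + (2 * s1 + 2 * e1 + σ1) + (2 * s2 + 2 * e2 + σ2) + (2 * s3 + 2 * e3 + σ3)) :
    h ≤ 56 := by
  obtain ⟨a1, -, a2, -⟩ := l1
  obtain ⟨c1, -, c2, -⟩ := l2
  obtain ⟨d1, -, d2, -⟩ := l3
  have := a1 b1
  have := c1 b2
  have := d1 b3
  omega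

lemma mid_case {h t u g s1 s2 s3 e1 e2 e3 σ1 σ2 σ3 : ℕ} (hu : u ≤ 8) (hg : 3 ≤ g) (hg4 : g ≤ 4)
    (l1 : Lc s1 e1 g σ1) (l2 : Lc s2 e2 g σ2) (l3 : Lc s3 e3 g σ3)
    (b1 : 6 ≤ s1) (b1' : s1 ≤ 8) (b2 : s2 ≤ 8) (b3 : s3 ≤ 8)
    (ht : t ≤ 9) (ht2 : 6 ≤ s2 → t ≤ 7) (ht3 : 6 ≤ s3 → t ≤ 7)
    (hh : 2 * h ≤ 2 * t + 2 * u + 2 * g + (2 * s1 + 2 * e1 + σ1) + (2 * s2 + 2 * e2 + σ2) + (2 * s3 + 2 * e3 + σ3)) :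
    h ≤ 56 := by
  obtain ⟨-, a1, a2, -⟩ := l1
  obtain ⟨c1, c3, c2, -⟩ := l2
  obtain ⟨d1, d3, d2, -⟩ := l3
  have := a1 b1
  rcases Nat.lt_or_ge s2 6 with k2 | k2 <;> rcases Nat.lt_or_ge s3 6 with k3 | k3
  · have := c1 (by omega); have := d1 (by omega); clear ht2 ht3 c1 c3 d1 d3 a1; omega
  · have := c1 (by omega); have := d3 k3; have := ht3 k3; clear ht2 ht3 c1 c3 d1 d3 a1; omega
  · have := c3 k2; have := d1 (by omega); have := ht2 k2; clear ht2 ht3 c1 c3 d1 d3 a1; omega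
  · have := c3 k2; have := d3 k3; have := ht3 k3; clear ht2 ht3 c1 c3 d1 d3 a1; omega

lemma big_case {h t u g s1 s2 s3 e1 e2 e3 σ1 σ2 σ3 : ℕ} (hu : u ≤ 8) (hg : 3 ≤ g) (hg4 : g ≤ 4)
    (l1 : Lc s1 e1 g σ1) (l2 : Lc s2 e2 g σ2) (l3 : Lc s3 e3 g σ3)
    (b1 : 9 ≤ s1) (b1' : s1 ≤ 12) (ht : t ≤ 6)
    (h12 : 6 ≤ s2 → s1 + s2 ≤ 17) (h13 : 6 ≤ s3 → s1 + s3 ≤ 17)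
    (hne : ¬ (e2 = 3 ∧ e3 = 3 ∧ 18 ≤ 2 * s2 + σ2 ∧ 18 ≤ 2 * s3 + σ3))
    (hh : 2 * h ≤ 2 * t + 2 * u + 2 * g + (2 * s1 + 2 * e1 + σ1) + (2 * s2 + 2 * e2 + σ2) + (2 * s3 + 2 * e3 + σ3)) :
    h ≤ 56 := by
  obtain ⟨-, a1, a2, -⟩ := l1
  obtain ⟨c1, c3, c2, -⟩ := l2
  obtain ⟨d1, d3, d2, -⟩ := l3
  have := a1 (by omega)
  rcases Nat.lt_or_ge s2 6 with k2 | k2 <;> rcases Nat.lt_or_ge s3 6 with k3 | k3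
  · have := c1 (by omega); have := d1 (by omega); clear h12 h13 c1 c3 d1 d3 a1; omega
  · have := c1 (by omega); have := d3 k3; have := h13 k3; clear hne h12 h13 c1 c3 d1 d3 a1; omega
  · have := c3 k2; have := d1 (by omega); have := h12 k2; clear hne h12 h13 c1 c3 d1 d3 a1; omega
  · have := c3 k2; have := d3 k3; have := h13 k3; have := h12 k2; clear hne h12 h13 c1 c3 d1 d3 a1; omega

lemma crn_big {i s t : ℕ} (hi : 1 ≤ i → CrN s t) (hs : 9 ≤ s) : i = 0 := by
  by_contra h
  have := (hi (by omega)).1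
  omega

lemma crn_mid {i s t : ℕ} (hi : 1 ≤ i → CrN s t) (hs : 6 ≤ s) (ht : 2 ≤ t) : i = 0 := by
  by_contra h
  have := (hi (by omega)).2.2.2.2.1 ht
  omega

lemma crn_two {i j s t u : ℕ} (hi : 1 ≤ i → CrN s t) (hj : 1 ≤ j → CrN s u) (hs : 6 ≤ s) (ht : 7 ≤ t + u) :
    i = 0 ∨ j = 0 := by
  rcases (show 2 ≤ t ∨ 2 ≤ u by omega) with h | h
  · exact Or.inl (crn_mid hi hs h)
  · exact Or.inr (crn_mid hj hs h)

lemma all3 {h t u s1 s2 s3 σ1 σ2 σ3 : ℕ} (ht : t ≤ 10) (hu : u ≤ 8)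
    (a1 : 2 * s1 + σ1 ≤ 16) (a2 : 2 * s2 + σ2 ≤ 16) (a3 : 2 * s3 + σ3 ≤ 16)
    (hh : 2 * h ≤ 2 * t + 2 * u + 2 * 3 + (2 * s1 + 2 * 3 + σ1) + (2 * s2 + 2 * 3 + σ2) + (2 * s3 + 2 * 3 + σ3)) :
    h ≤ 56 := by omega

lemma loc8 {s P R P' R' : ℕ} (h1 : 1 ≤ s) (h3 : s ≤ 3) (l : LG s P R) (l' : LG s P' R') (c : P ≤ 2 ∨ R ≤ 2)
    (c' : P' ≤ 2 ∨ R' ≤ 2) : 2 * s + (P + R + P' + R') ≤ 16 := by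
  obtain ⟨-, -, a, -⟩ := lgA h1 l
  obtain ⟨-, -, b, -⟩ := lgA h1 l'
  have a := a h3
  have b := b h3
  omega

lemma arith5 {h s1 s2 s3 s4 s5 E12 E13 E23 E14 E15 E24 E25 E34 E35 g : ℕ}
    {i12 i13 i23 i14 i15 i24 i25 i34 i35 i45 : ℕ}
    (p1 : 1 ≤ s1) (p2 : 1 ≤ s2) (p3 : 1 ≤ s3) (p4 : 1 ≤ s4) (p5 : 1 ≤ s5)
    (h45 : s4 + s5 ≤ 8) (h11 : 11 ≤ s4 + s5 + g) (hg4 : g ≤ 4)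
    (m2 : s2 ≤ s1) (m3 : s3 ≤ s1) (h12 : s1 ≤ 12) (x12 : 5 ≤ s1 → 5 ≤ s2 → s1 + s2 ≤ 17)
    (x13 : 5 ≤ s1 → 5 ≤ s3 → s1 + s3 ≤ 17)
    (a1 : LG s1 E23 g) (a2 : LG s1 E24 E35) (a3 : LG s1 E25 E34)
    (b1 : LG s2 E13 g) (b2 : LG s2 E14 E35) (b3 : LG s2 E15 E34)
    (c1 : LG s3 E12 g) (c2 : LG s3 E14 E25) (c3 : LG s3 E15 E24)
    (d1 : LG s4 E12 E35) (d2 : LG s4 E13 E25) (d3 : LG s4 E23 E15)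
    (e1 : LG s5 E12 E34) (e2 : LG s5 E13 E24) (e3 : LG s5 E23 E14)
    (i12l : i12 ≤ 1) (i13l : i13 ≤ 1) (i23l : i23 ≤ 1) (i14l : i14 ≤ 1) (i15l : i15 ≤ 1) (i24l : i24 ≤ 1)
    (i25l : i25 ≤ 1) (i34l : i34 ≤ 1) (i35l : i35 ≤ 1) (i45l : i45 ≤ 1)
    (j12 : 1 ≤ i12 → CrN s1 s2) (j13 : 1 ≤ i13 → CrN s1 s3) 
    (j14 : 1 ≤ i14 → CrN s1 s4) (j15 : 1 ≤ i15 → CrN s1 s5) (j24 : 1 ≤ i24 → CrN s2 s4)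
    (j25 : 1 ≤ i25 → CrN s2 s5) (j34 : 1 ≤ i34 → CrN s3 s4) (j35 : 1 ≤ i35 → CrN s3 s5)
    (hh : h ≤ (i12 + i13 + i23 + i14 + i15 + i24 + i25 + i34 + i35 + i45) +
      (E12 + E13 + E23 + E14 + E15 + E24 + E25 + E34 + E35 + g) + (s1 + s2 + s3 + s4 + s5)) : h ≤ 56 := by
  have hg : 3 ≤ g := by clear * - h45 h11; omega
  have l1 := lc p1 a1 a2 a3 hg
  have l2 := lc p2 b1 b2 b3 hg
  have l3 := lc p3 c1 c2 c3 hg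
  have h7 : 7 ≤ s4 + s5 := by clear * - h11 hg4; omega
  obtain ⟨t, ht⟩ : ∃ t, t = i12 + i13 + i23 + i14 + i15 + i24 + i25 + i34 + i35 + i45 := ⟨_, rfl⟩
  have h2 : 2 * h ≤ 2 * t + 2 * (s4 + s5) + 2 * g + (2 * s1 + 2 * E23 + (E24 + E35 + E25 + E34)) +
    (2 * s2 + 2 * E13 + (E14 + E35 + E15 + E34)) + (2 * s3 + 2 * E12 + (E14 + E25 + E15 + E24)) := by
    clear * - hh ht; omega
  have t10 : t ≤ 10 := by clear * - ht i12l i13l i23l i14l i15l i24l i25l i34l i35l i45l; omega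
  rcases Nat.lt_or_ge s1 6 with q | q
  · by_cases hne : E23 = 3 ∧ E13 = 3 ∧ E12 = 3
    · obtain ⟨rfl, rfl, rfl⟩ := hne
      have f := (lgB a1 hg).2.1
      have g3 : g = 3 := by clear * - f hg; omega
      subst g3
      have s1l := (lgB a1 hg).2.2 le_rfl
      have s2l := (lgB b1 hg).2.2 le_rfl
      have s3l := (lgB c1 hg).2.2 le_rfl
      rcases (show 4 ≤ s4 ∨ 4 ≤ s5 by clear * - h7; omega) with k | k
      · have u1 := (lgA p4 d1).2.2.2 k
        have u2 := (lgA p4 d2).2.2.2 k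
        have u3 := (lgA p4 d3).2.2.2 k
        exact all3 t10 h45 (loc8 p1 s1l a2 a3 (Or.inr (by omega)) (Or.inl (by omega)))
          (loc8 p2 s2l b2 b3 (Or.inr (by omega)) (Or.inl (by omega)))
          (loc8 p3 s3l c2 c3 (Or.inr (by omega)) (Or.inl (by omega))) h2
      · have u1 := (lgA p5 e1).2.2.2 k
        have u2 := (lgA p5 e2).2.2.2 k
        have u3 := (lgA p5 e3).2.2.2 k
        exact all3 t10 h45 (loc8 p1 s1l a2 a3 (Or.inl (by omega)) (Or.inr (by omega)))
          (loc8 p2 s2l b2 b3 (Or.inl (by omega)) (Or.inr (by omega)))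
          (loc8 p3 s3l c2 c3 (Or.inl (by omega)) (Or.inr (by omega))) h2
    · exact small_case t10 h45 hg hg4 l1 l2 l3 (by clear * - q; omega) (by clear * - q m2; omega)
        (by clear * - q m3; omega) hne h2
  rcases Nat.lt_or_ge s1 9 with q' | q'
  · have z1 := crn_two j14 j15 q h7
    refine mid_case h45 hg hg4 l1 l2 l3 q (by clear * - q'; omega) (by clear * - q' m2; omega)
        (by clear * - q' m3; omega) ?_ ?_ ?_ h2
    · clear * - ht i12l i13l i23l i14l i15l i24l i25l i34l i35l i45l z1; omega
    · intro k
      have z2 := crn_two j24 j25 k h7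
      have z3 := crn_mid j12 q (by clear * - k; omega)
      clear * - ht i12l i13l i23l i14l i15l i24l i25l i34l i35l i45l z1 z2 z3; omega
    · intro k
      have z2 := crn_two j34 j35 k h7
      have z3 := crn_mid j13 q (by clear * - k; omega)
      clear * - ht i12l i13l i23l i14l i15l i24l i25l i34l i35l i45l z1 z2 z3; omega
  · have z1 := crn_big j12 q'
    have z2 := crn_big j13 q'
    have z3 := crn_big j14 q'
    have z4 := crn_big j15 q'
    refine big_case h45 hg hg4 l1 l2 l3 q' h12 ?_ ?_ ?_ ?_ h2
    · clear * - ht i12l i13l i23l i14l i15l i24l i25l i34l i35l i45l z1 z2 z3 z4; omega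
    · intro k; exact x12 (by clear * - q'; omega) (by clear * - k; omega)
    · intro k; exact x13 (by clear * - q'; omega) (by clear * - k; omega)
    · rintro ⟨r1, r2, r3, r4⟩
      have s2l := (lgB b1 hg).2.2 r1.ge
      have s3l := (lgB c1 hg).2.2 r2.ge
      obtain ⟨v1, -, v2, -⟩ := lgA p2 b2
      obtain ⟨v1', -, v2', -⟩ := lgA p2 b3
      obtain ⟨w1, -, w2, -⟩ := lgA p3 c2
      obtain ⟨w1', -, w2', -⟩ := lgA p3 c3
      have v1 := v1' (by clear * - s2l; omega)
      have v2 := v2 s2l (by clear * - v1 r3; omega)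
      have w1 := w1 (by clear * - s3l; omega)
      have w2 := w2' s3l (by clear * - w1 r4; omega)
      have := (lgA p1 a2).2.1 (by clear * - q; omega)
      clear * - this v2 w2; omega


lemma Good.lg {H : Finset (Finset ℕ)} (hG : Good H) {Q : Finset ℕ} (hQ : Cov H Q) {k a b c d : ℕ}
    (h : HG (Mk H Q k) (Ev H Q {a, b}) (Ev H Q {c, d})) (h1 : 1 ≤ (Mk H Q k).card) :
    LG (Mk H Q k).card (Ev H Q {a, b}).card (Ev H Q {c, d}).card :=
  lemG (hG.gr hQ k) h h1 (hG.e4 hQ a b) (hG.e4 hQ c d)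

lemma pairs5 {a b c x y : ℕ} (hab : a ≠ b) (hac : a ≠ c) (hbc : b ≠ c) (hxa : x ≠ a) (hxb : x ≠ b) (hxc : x ≠ c)
    (hya : y ≠ a) (hyb : y ≠ b) (hyc : y ≠ c) (hxy : x ≠ y) (f : Finset ℕ → ℕ) :
    ∑ p ∈ (insert y (insert x ({a, b, c} : Finset ℕ))).powersetCard 2, f p =
      f {a, b} + f {a, c} + f {b, c} + f {a, x} + f {a, y} + f {b, x} + f {b, y} + f {c, x} + f {c, y} + f {x, y} := by
  rw [pairs_insert (by simp [*, hxy.symm]), pairs_insert (by simp [*]), pairs3 hab hac hbc,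
    Finset.sum_insert (by simp [*]), Finset.sum_insert (by simp [*]), Finset.sum_insert (by simp [*]),
    Finset.sum_singleton,
    Finset.sum_insert (by simp [*]), Finset.sum_insert (by simp [*]), Finset.sum_singleton,
    Finset.pair_comm x a, Finset.pair_comm x b, Finset.pair_comm x c, Finset.pair_comm y a, Finset.pair_comm y b,
    Finset.pair_comm y c, Finset.pair_comm y x]
  ring

set_option maxHeartbeats 4000000 in
lemma Good.main5 {H : Finset (Finset ℕ)} (hG : Good H) (hN : ∀ Q : Finset ℕ, Q.card ≤ 4 → ¬ Cov H Q)
    {a b c x y : ℕ} (hab : a ≠ b) (hac : a ≠ c) (hbc : b ≠ c) (hxa : x ≠ a) (hxb : x ≠ b) (hxc : x ≠ c)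
    (hya : y ≠ a) (hyb : y ≠ b) (hyc : y ≠ c) (hxy : x ≠ y) (hA : {a, b, c} ∈ H) {Q : Finset ℕ}
    (hQe : Q = insert y (insert x ({a, b, c} : Finset ℕ))) (hQ : Cov H Q)
    (h11 : 11 ≤ (H.filter (fun F => Disjoint F {a, b, c})).card)
    (m2 : (Mk H Q b).card ≤ (Mk H Q a).card) (m3 : (Mk H Q c).card ≤ (Mk H Q a).card) : H.card ≤ 56 := by
  have ma : a ∈ Q := by rw [hQe]; simp
  have mb : b ∈ Q := by rw [hQe]; simp
  have mc : c ∈ Q := by rw [hQe]; simp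
  have mx : x ∈ Q := by rw [hQe]; simp
  have my : y ∈ Q := by rw [hQe]; simp
  have hQ5 : Q.card = 5 := by
    rw [hQe, Finset.card_insert_of_notMem (by simp [*, hxy.symm]), Finset.card_insert_of_notMem (by simp [*]),
      Finset.card_eq_three.mpr ⟨a, b, c, hab, hac, hbc, rfl⟩]
  have p1 := hG.ne5 hN hQ hQ5 ma
  have p2 := hG.ne5 hN hQ hQ5 mb
  have p3 := hG.ne5 hN hQ hQ5 mc
  have p4 := hG.ne5 hN hQ hQ5 mx
  have p5 := hG.ne5 hN hQ hQ5 my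
  have hAQ : ({a, b, c} : Finset ℕ) ⊆ Q := by rw [hQe]; intro z; simp; tauto
  have hcr : Cr (Mk H Q x) (Mk H Q y) := hG.mma mx my hxy hA hAQ (by simp [*]) (by simp [*])
  have h45 : (Mk H Q x).card + (Mk H Q y).card ≤ 8 := by
    rcases cross_sum (hG.gr hQ x) (hG.gr hQ y) hcr p4 p5 with h | ⟨h, h'⟩ | ⟨h, h'⟩
    · exact h
    · exact (hG.no81 hQ mx my hxy hcr.symm h h').elim
    · exact (hG.no81 hQ my mx hxy.symm hcr h' h).elim
  have hd := dA_le hG.c3 hQ (A := {a, b, c}) (x := x) (y := y) (by rw [hQe]; ext z; simp; tauto) hxy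
  have hg4 := hG.e4 hQ x y
  have g3 : 3 ≤ (Ev H Q {x, y}).card := by omega
  have x12 := hG.e45 hQ ma mb mx my hab hxa.symm hya.symm hxb.symm hyb.symm p2 g3
  have x13 := hG.e45 hQ ma mc mx my hac hxa.symm hya.symm hxc.symm hyc.symm p3 g3
  have dc := decomp hG.c3 hQ
  have tl := t_le hG.c3 hQ5
  have e1 := pairs5 hab hac hbc hxa hxb hxc hya hyb hyc hxy (fun p => (Ev H Q p).card)
  have e2 := pairs5 hab hac hbc hxa hxb hxc hya hyb hyc hxy (fun p => ind H Q p)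
  have e3 : ∑ k ∈ Q, (Mk H Q k).card = (Mk H Q y).card + ((Mk H Q x).card + ((Mk H Q a).card + ((Mk H Q b).card +
      (Mk H Q c).card))) := by
    nth_rewrite 1 [hQe]
    rw [Finset.sum_insert (by simp [*, hxy.symm]), Finset.sum_insert (by simp [*]), Finset.sum_insert (by simp [*]),
      Finset.sum_insert (by simp [*]), Finset.sum_singleton]
  rw [← hQe] at e1 e2
  rw [e1, e3] at dc
  rw [e2] at tl
  refine arith5 (h := H.card) (s1 := (Mk H Q a).card) (s2 := (Mk H Q b).card) (s3 := (Mk H Q c).card)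
    (s4 := (Mk H Q x).card) (s5 := (Mk H Q y).card) p1 p2 p3 p4 p5 h45 (h11.trans hd) hg4 m2 m3 x12.1 x12.2 x13.2
    (hG.lg hQ (a := b) (b := c) (c := x) (d := y) (hG.mee ?_ ?_ ?_ ?_ ?_ ?_ ?_ ?_ ?_ ?_ ?_ ?_ ?_) ?_)
    (hG.lg hQ (a := b) (b := x) (c := c) (d := y) (hG.mee ?_ ?_ ?_ ?_ ?_ ?_ ?_ ?_ ?_ ?_ ?_ ?_ ?_) ?_)
    (hG.lg hQ (a := b) (b := y) (c := c) (d := x) (hG.mee ?_ ?_ ?_ ?_ ?_ ?_ ?_ ?_ ?_ ?_ ?_ ?_ ?_) ?_)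
    (hG.lg hQ (a := a) (b := c) (c := x) (d := y) (hG.mee ?_ ?_ ?_ ?_ ?_ ?_ ?_ ?_ ?_ ?_ ?_ ?_ ?_) ?_)
    (hG.lg hQ (a := a) (b := x) (c := c) (d := y) (hG.mee ?_ ?_ ?_ ?_ ?_ ?_ ?_ ?_ ?_ ?_ ?_ ?_ ?_) ?_)
    (hG.lg hQ (a := a) (b := y) (c := c) (d := x) (hG.mee ?_ ?_ ?_ ?_ ?_ ?_ ?_ ?_ ?_ ?_ ?_ ?_ ?_) ?_)
    (hG.lg hQ (a := a) (b := b) (c := x) (d := y) (hG.mee ?_ ?_ ?_ ?_ ?_ ?_ ?_ ?_ ?_ ?_ ?_ ?_ ?_) ?_)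
    (hG.lg hQ (a := a) (b := x) (c := b) (d := y) (hG.mee ?_ ?_ ?_ ?_ ?_ ?_ ?_ ?_ ?_ ?_ ?_ ?_ ?_) ?_)
    (hG.lg hQ (a := a) (b := y) (c := b) (d := x) (hG.mee ?_ ?_ ?_ ?_ ?_ ?_ ?_ ?_ ?_ ?_ ?_ ?_ ?_) ?_)
    (hG.lg hQ (a := a) (b := b) (c := c) (d := y) (hG.mee ?_ ?_ ?_ ?_ ?_ ?_ ?_ ?_ ?_ ?_ ?_ ?_ ?_) ?_)
    (hG.lg hQ (a := a) (b := c) (c := b) (d := y) (hG.mee ?_ ?_ ?_ ?_ ?_ ?_ ?_ ?_ ?_ ?_ ?_ ?_ ?_) ?_)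
    (hG.lg hQ (a := b) (b := c) (c := a) (d := y) (hG.mee ?_ ?_ ?_ ?_ ?_ ?_ ?_ ?_ ?_ ?_ ?_ ?_ ?_) ?_)
    (hG.lg hQ (a := a) (b := b) (c := c) (d := x) (hG.mee ?_ ?_ ?_ ?_ ?_ ?_ ?_ ?_ ?_ ?_ ?_ ?_ ?_) ?_)
    (hG.lg hQ (a := a) (b := c) (c := b) (d := x) (hG.mee ?_ ?_ ?_ ?_ ?_ ?_ ?_ ?_ ?_ ?_ ?_ ?_ ?_) ?_)
    (hG.lg hQ (a := b) (b := c) (c := a) (d := x) (hG.mee ?_ ?_ ?_ ?_ ?_ ?_ ?_ ?_ ?_ ?_ ?_ ?_ ?_) ?_)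
    (ind_le H Q {a, b}) (ind_le H Q {a, c}) (ind_le H Q {b, c}) (ind_le H Q {a, x}) (ind_le H Q {a, y})
    (ind_le H Q {b, x}) (ind_le H Q {b, y}) (ind_le H Q {c, x}) (ind_le H Q {c, y}) (ind_le H Q {x, y})
    (hG.indcr hQ ma mb hab p1 p2) (hG.indcr hQ ma mc hac p1 p3)
    (hG.indcr hQ ma mx hxa.symm p1 p4) (hG.indcr hQ ma my hya.symm p1 p5)
    (hG.indcr hQ mb mx hxb.symm p2 p4) (hG.indcr hQ mb my hyb.symm p2 p5)
    (hG.indcr hQ mc mx hxc.symm p3 p4) (hG.indcr hQ mc my hyc.symm p3 p5) ?_ <;>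
    first
    | assumption
    | (apply Ne.symm; assumption)
    | (clear * - dc tl; omega)

lemma Good.final {H : Finset (Finset ℕ)} (hG : Good H) : H.card ≤ 56 := by
  by_cases h4 : ∃ Q : Finset ℕ, Q.card = 4 ∧ Cov H Q
  · obtain ⟨Q, h, hQ⟩ := h4
    exact hG.tau4 hQ h
  have hN : ∀ Q : Finset ℕ, Q.card ≤ 4 → ¬ Cov H Q := by
    intro Q hc hQ
    obtain ⟨Q', hs, hc'⟩ := Infinite.exists_superset_card_eq Q 4 hc
    exact h4 ⟨Q', hc', fun F hF hd => hQ F hF (hd.mono_right hs)⟩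
  by_cases hall : ∀ A ∈ H, (H.filter (fun F => Disjoint F A)).card ≤ 10
  · obtain ⟨A, hA, B, hB, hAB, -⟩ := hG.pp 0 0
    have := hG.step3 hN hA hB hAB
    have := hall A hA
    have := hall B hB
    omega
  push Not at hall
  obtain ⟨A, hA, h11⟩ := hall
  have hex : ∃ x y : ℕ, ∀ F ∈ H, Disjoint F A → x ∈ F ∨ y ∈ F := by
    by_contra hc
    push Not at hc
    have : EL (H.filter (fun F => Disjoint F A)) := by
      refine ⟨?_, ?_, ?_⟩
      · intro F hF
        exact hG.c3 F (Finset.mem_filter.mp hF).1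
      · intro F hF F' hF' hd
        rw [Finset.mem_filter] at hF hF'
        exact hG.n3 A hA F hF.1 F' hF'.1 hF.2.symm hF'.2.symm hd
      · intro x y
        obtain ⟨F, hF, hd, h⟩ := hc x y
        exact ⟨F, Finset.mem_filter.mpr ⟨hF, hd⟩, h⟩
    have := this.main
    omega
  obtain ⟨x, y, hxy'⟩ := hex
  obtain ⟨a, b, c, hab, hac, hbc, rfl⟩ := Finset.card_eq_three.mp (hG.c3 A hA)
  have hQ : Cov H (insert y (insert x ({a, b, c} : Finset ℕ))) := by
    intro F hF hd
    rw [Finset.disjoint_insert_right, Finset.disjoint_insert_right] at hd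
    have := hxy' F hF hd.2.2
    tauto
  have h3c : ({a, b, c} : Finset ℕ).card = 3 := hG.c3 _ hA
  have hx : x ∉ ({a, b, c} : Finset ℕ) := by
    intro hx
    rw [Finset.insert_eq_of_mem hx] at hQ
    exact hN _ ((Finset.card_insert_le _ _).trans (by omega)) hQ
  have hy : y ∉ insert x ({a, b, c} : Finset ℕ) := by
    intro hy
    rw [Finset.insert_eq_of_mem hy] at hQ
    exact hN _ ((Finset.card_insert_le _ _).trans (by omega)) hQ
  simp only [Finset.mem_insert, Finset.mem_singleton, not_or] at hx hy
  obtain ⟨hxa, hxb, hxc⟩ := hx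
  obtain ⟨hyx, hya, hyb, hyc⟩ := hy
  obtain ⟨Q, hQe⟩ : ∃ Q, Q = insert y (insert x ({a, b, c} : Finset ℕ)) := ⟨_, rfl⟩
  rw [← hQe] at hQ
  have r1 : ({b, a, c} : Finset ℕ) = {a, b, c} := by ext; simp; tauto
  have r2 : ({c, a, b} : Finset ℕ) = {a, b, c} := by ext; simp; tauto
  rcases (show ((Mk H Q b).card ≤ (Mk H Q a).card ∧ (Mk H Q c).card ≤ (Mk H Q a).card) ∨
    ((Mk H Q a).card ≤ (Mk H Q b).card ∧ (Mk H Q c).card ≤ (Mk H Q b).card) ∨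
    ((Mk H Q a).card ≤ (Mk H Q c).card ∧ (Mk H Q b).card ≤ (Mk H Q c).card) by omega) with ⟨u, v⟩ | ⟨u, v⟩ | ⟨u, v⟩
  · exact hG.main5 hN hab hac hbc hxa hxb hxc hya hyb hyc (Ne.symm hyx) hA hQe hQ h11 u v
  · exact hG.main5 hN (Ne.symm hab) hbc hac hxb hxa hxc hyb hya hyc (Ne.symm hyx) (by rwa [r1]) (by rwa [r1]) hQ
      (by rw [r1]; exact h11) u v
  · exact hG.main5 hN (Ne.symm hac) (Ne.symm hbc) hab hxc hxa hxb hyc hya hyb (Ne.symm hyx) (by rwa [r2]) (by rwa [r2]) hQ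
      (by rw [r2]; exact h11) u v

lemma mn_set_bdd (H : Finset (Finset ℕ)) : BddAbove {m | ∃ M : Finset (Finset ℕ), M ⊆ H ∧ M.card = m ∧
    (M : Set (Finset ℕ)).PairwiseDisjoint id} := by
  refine ⟨H.card, ?_⟩
  rintro m ⟨M, hM, rfl, -⟩
  exact Finset.card_le_card hM

lemma le_mn {H M : Finset (Finset ℕ)} (hM : M ⊆ H) (hd : (M : Set (Finset ℕ)).PairwiseDisjoint id) :
    M.card ≤ matchingNumber H :=
  le_csSup (mn_set_bdd H) ⟨M, hM, rfl, hd⟩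

lemma mn_mem (H : Finset (Finset ℕ)) : ∃ M : Finset (Finset ℕ), M ⊆ H ∧ M.card = matchingNumber H ∧
    (M : Set (Finset ℕ)).PairwiseDisjoint id :=
  Nat.sSup_mem (s := {m | ∃ M : Finset (Finset ℕ), M ⊆ H ∧ M.card = m ∧
    (M : Set (Finset ℕ)).PairwiseDisjoint id}) ⟨0, ∅, by simp, by simp, by simp⟩ (mn_set_bdd H)

lemma good_of {n : ℕ} {H : Finset (Finset ℕ)} (hs : H ⊆ (Finset.range n).powersetCard 3)
    (hr : Resilient 2 H) (h2 : matchingNumber H = 2) : Good H := by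
  have c3 : ∀ F ∈ H, F.card = 3 := fun F hF => (Finset.mem_powersetCard.mp (hs hF)).2
  have ne : ∀ A ∈ H, ∀ B ∈ H, Disjoint A B → A ≠ B := by
    rintro A hA B hB hd rfl
    rw [disjoint_self] at hd
    have := c3 A hA
    rw [hd] at this
    simp at this
  refine ⟨c3, ?_, ?_⟩
  · intro A hA B hB C hC h1 h2' h3
    have := le_mn (H := H) (M := {A, B, C}) (by intro x; simp; rintro (rfl | rfl | rfl) <;> assumption) (by
      intro x hx y hy hxy
      simp only [Finset.coe_insert, Finset.coe_singleton, Set.mem_insert_iff, Set.mem_singleton_iff] at hx hy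
      simp only [Function.onFun, id]
      rcases hx with rfl | rfl | rfl <;> rcases hy with rfl | rfl | rfl <;>
        first | (exact absurd rfl hxy) | assumption | (apply Disjoint.symm; assumption))
    rw [h2, Finset.card_eq_three.mpr ⟨A, B, C, ne A hA B hB h1, ne A hA C hC h2', ne B hB C hC h3, rfl⟩] at this
    omega
  · intro x y
    have := hr {x, y} Finset.card_le_two
    obtain ⟨M, hM, hc, hd⟩ := mn_mem (H.filter fun F => Disjoint F {x, y})
    rw [this, h2] at hc
    obtain ⟨A, B, hAB, rfl⟩ := Finset.card_eq_two.mp hc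
    have hA := Finset.mem_filter.mp (hM (show A ∈ ({A, B} : Finset (Finset ℕ)) by simp))
    have hB := Finset.mem_filter.mp (hM (show B ∈ ({A, B} : Finset (Finset ℕ)) by simp))
    have hdd : Disjoint A B := hd (by simp) (by simp) hAB
    have f1 := Finset.disjoint_right.mp hA.2
    have f2 := Finset.disjoint_right.mp hB.2
    exact ⟨A, hA.1, B, hB.1, hdd, f1 (by simp), f2 (by simp), f1 (by simp), f2 (by simp)⟩

lemma mn8_le {H : Finset (Finset ℕ)} (hs : H ⊆ (Finset.range 8).powersetCard 3) : matchingNumber H ≤ 2 := by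
  obtain ⟨M, hM, hc, hd⟩ := mn_mem H
  rw [← hc]
  have h1 : (M.biUnion id).card = ∑ F ∈ M, (id F).card := Finset.card_biUnion hd
  have h2 : ∑ F ∈ M, (id F).card = ∑ F ∈ M, 3 :=
    Finset.sum_congr rfl (fun F hF => (Finset.mem_powersetCard.mp (hs (hM hF))).2)
  have h3 : (M.biUnion id).card ≤ (Finset.range 8).card := by
    apply Finset.card_le_card
    rw [Finset.biUnion_subset]
    exact fun F hF => (Finset.mem_powersetCard.mp (hs (hM hF))).1
  rw [h1, h2, Finset.sum_const, Finset.card_range, smul_eq_mul] at h3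
  omega

lemma mn8_ge (T : Finset ℕ) (hT : T.card ≤ 2) :
    2 ≤ matchingNumber (((Finset.range 8).powersetCard 3).filter fun F => Disjoint F T) := by
  have h6 : 6 ≤ (Finset.range 8 \ T).card := by
    have := Finset.le_card_sdiff T (Finset.range 8)
    rw [Finset.card_range] at this
    omega
  obtain ⟨A, hA, hA3⟩ := Finset.exists_subset_card_eq (s := Finset.range 8 \ T) (n := 3) (by omega)
  have h3 : 3 ≤ ((Finset.range 8 \ T) \ A).card := by
    rw [Finset.card_sdiff_of_subset hA]; omega
  obtain ⟨B, hB, hB3⟩ := Finset.exists_subset_card_eq h3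
  have hAB : Disjoint A B := (Finset.disjoint_of_subset_left hB Finset.sdiff_disjoint).symm
  have hne : A ≠ B := by
    rintro rfl
    rw [disjoint_self] at hAB
    rw [hAB] at hA3
    simp at hA3
  have key : ∀ F : Finset ℕ, F ⊆ Finset.range 8 \ T → F.card = 3 →
      F ∈ ((Finset.range 8).powersetCard 3).filter fun F => Disjoint F T := by
    intro F hF h
    rw [Finset.mem_filter, Finset.mem_powersetCard]
    exact ⟨⟨hF.trans Finset.sdiff_subset, h⟩, Finset.disjoint_of_subset_left hF Finset.sdiff_disjoint⟩
  have := le_mn (H := ((Finset.range 8).powersetCard 3).filter fun F => Disjoint F T) (M := {A, B})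
    (by
      intro x hx
      simp only [Finset.mem_insert, Finset.mem_singleton] at hx
      rcases hx with rfl | rfl
      · exact key _ hA hA3
      · exact key _ (hB.trans Finset.sdiff_subset) hB3)
    (by
      intro x hx y hy hxy
      simp only [Finset.coe_insert, Finset.coe_singleton, Set.mem_insert_iff, Set.mem_singleton_iff] at hx hy
      simp only [Function.onFun, id]
      rcases hx with rfl | rfl <;> rcases hy with rfl | rfl <;>
        first | (exact absurd rfl hxy) | assumption | (apply Disjoint.symm; assumption))
  rwa [Finset.card_pair hne] at this

/-- `m(3,2) = C(8,3) = 56`: every 2-resilient 3-graph with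
matching number 2 has at most 56 edges, and the complete 3-graph on 8 vertices
attains this bound. -/
theorem stmt8 :
    (∀ (n : ℕ) (H : Finset (Finset ℕ)),
      H ⊆ (Finset.range n).powersetCard 3 →
      Resilient 2 H → matchingNumber H = 2 → H.card ≤ 56) ∧
    (Resilient 2 ((Finset.range 8).powersetCard 3) ∧
      matchingNumber ((Finset.range 8).powersetCard 3) = 2 ∧
      ((Finset.range 8).powersetCard 3).card = 56) := by
  have h2 : matchingNumber ((Finset.range 8).powersetCard 3) = 2 := by
    apply le_antisymm (mn8_le (Finset.Subset.refl _))
    have := mn8_ge ∅ (by simp)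
    rwa [Finset.filter_true_of_mem (fun F _ => Finset.disjoint_empty_right F)] at this
  refine ⟨fun n H hs hr h => (good_of hs hr h).final, ?_, h2, ?_⟩
  · intro T hT
    rw [h2]
    exact le_antisymm (mn8_le (Finset.filter_subset _ _)) (mn8_ge T hT)
  · rw [Finset.card_powersetCard, Finset.card_range]
    rfl
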